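/- arXiv:2303.13964 — 7 statements merged into one kernel-verified Lean document; each statement's English description precedes it below -/
import Mathlib

section
/- Fix a differentiable nonlinearity φ, a differentiable loss ℓ, labels (Y_obs)_u for u in a set V_tr of nodes, and define the inner objective F_in(W,A) = (1/|V_tr|) Σ_{u∈V_tr} ℓ((Y_W(X,A))_u, (Y_obs)_u), where Y_W(X,A) is the output of a k-layer GCN with parameters W. Define iterates W_0(A) = W_0 (an initialization independent of A) and W_{t+1}(A) = W_t(A) − Q_t(W_t(A), ∇_W F_in(W_t(A), A)) for arbitrary functions Q_t. Let G be a graph on the n nodes, let A and A' both be supported on G, agreeing on every entry except possibly the entry (i,j), where nodes i and j both satisfy dist_G(i,v) ≥ k and dist_G(j,v) ≥ k for every v ∈ V_tr. Then for every t ∈ ℕ, W_t(A) = W_t(A'); in particular the derivative of W_t(A) with respect to the entry A_{ij} is zero. -/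
/-!
After `l` layers, the features at a node `u` depend only on the rows of the adjacency matrix at
nodes within distance `l - 1` of `u`. Hence changing the entry `(i, j)`, which lies in row `i`, does
not affect the output at training nodes, all of which are at distance at least `k` from `i`
(`gcnForward_eq_of_le_edist`). The inner objectives for the two matrices are therefore the same
function of the parameters, so they have the same gradient everywhere, and the iterates agree by
induction on `t`.

The same comparison applies to every matrix obtained from `A` by changing the entry `(i, j)`, even
when `{i, j}` is not an edge of `G`. The iterate is thus constant along the line obtained by varying
that entry, and its derivative vanishes.
-/

/-!
STATEMENT 1: gradient-based inner iterates `W_t(A)` of the GCN training objective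
`F_in` do not depend on the entry `A i j` when `i` and `j` are at least `k` hops
from every labelled node in `V_tr`.
-/

open scoped BigOperators

attribute [local instance] Matrix.normedAddCommGroup Matrix.normedSpace

/-- The output `X^[k]` of the first `k` layers of a message-passing GCN:
`X^[0] = X`, `X^[l+1] = φ (X^[l] * W1 l + A * X^[l] * W2 l + 1ₙ (b l)ᵀ)`. -/
noncomputable def gcnForward {n : ℕ} (φ : ℝ → ℝ) (d : ℕ → ℕ)
    (W1 W2 : ∀ l : ℕ, Matrix (Fin (d l)) (Fin (d (l + 1))) ℝ)
    (b : ∀ l : ℕ, Fin (d (l + 1)) → ℝ)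
    (A : Matrix (Fin n) (Fin n) ℝ) (X : Matrix (Fin n) (Fin (d 0)) ℝ) :
    ∀ k : ℕ, Matrix (Fin n) (Fin (d k)) ℝ
  | 0 => X
  | (k + 1) => Matrix.of fun u c =>
      φ ((gcnForward φ d W1 W2 b A X k * W1 k) u c
        + (A * gcnForward φ d W1 W2 b A X k * W2 k) u c + b k c)

/-- The parameters `W = {W1^[l], W2^[l], b^[l]}_{l=1}^k` of a `k`-layer GCN,
regarded as a point of a finite-dimensional real normed vector space. -/
abbrev GCNParams (d : ℕ → ℕ) (k : ℕ) : Type :=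
  ∀ l : Fin k,
    Matrix (Fin (d l)) (Fin (d (l + 1))) ℝ ×
      Matrix (Fin (d l)) (Fin (d (l + 1))) ℝ × (Fin (d (l + 1)) → ℝ)

/-- First weight matrices, extended by junk above layer `k`. -/
noncomputable def pW1 {d : ℕ → ℕ} {k : ℕ} (W : GCNParams d k) :
    ∀ l : ℕ, Matrix (Fin (d l)) (Fin (d (l + 1))) ℝ :=
  fun l => if h : l < k then (W ⟨l, h⟩).1 else 0

/-- Second weight matrices, extended by junk above layer `k`. -/
noncomputable def pW2 {d : ℕ → ℕ} {k : ℕ} (W : GCNParams d k) :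
    ∀ l : ℕ, Matrix (Fin (d l)) (Fin (d (l + 1))) ℝ :=
  fun l => if h : l < k then (W ⟨l, h⟩).2.1 else 0

/-- Biases, extended by junk above layer `k`. -/
noncomputable def pB {d : ℕ → ℕ} {k : ℕ} (W : GCNParams d k) :
    ∀ l : ℕ, Fin (d (l + 1)) → ℝ :=
  fun l => if h : l < k then (W ⟨l, h⟩).2.2 else 0

/-- The inner objective
`F_in (W, A) = (1/|V_tr|) ∑_{u ∈ V_tr} ℓ ((Y_W (X, A))_u, (Y_obs)_u)`. -/
noncomputable def Finner {n : ℕ} (φ : ℝ → ℝ) (d : ℕ → ℕ) (k : ℕ)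
    (ℓ : (Fin (d k) → ℝ) → ℝ → ℝ) (X : Matrix (Fin n) (Fin (d 0)) ℝ)
    (Yobs : Fin n → ℝ) (Vtr : Finset (Fin n))
    (W : GCNParams d k) (A : Matrix (Fin n) (Fin n) ℝ) : ℝ :=
  (Vtr.card : ℝ)⁻¹ *
    ∑ u ∈ Vtr, ℓ (fun c => gcnForward φ d (pW1 W) (pW2 W) (pB W) A X k u c) (Yobs u)

/-- Locality of message passing: the layer-`l` features of a node at distance at least `l`
from `i` do not see the entry `(i, j)`. A node at positive distance from `i` has the same row in `A`
and `B`, supported on its closed neighbourhood, whose nodes are at most one step closer to `i`. -/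
theorem gcnForward_eq_of_le_edist {n : ℕ} (φ : ℝ → ℝ) (d : ℕ → ℕ)
    (W1 W2 : ∀ l : ℕ, Matrix (Fin (d l)) (Fin (d (l + 1))) ℝ)
    (b : ∀ l : ℕ, Fin (d (l + 1)) → ℝ)
    (X : Matrix (Fin n) (Fin (d 0)) ℝ) (G : SimpleGraph (Fin n))
    (A B : Matrix (Fin n) (Fin n) ℝ)
    (hA : ∀ s t, s ≠ t → ¬ G.Adj s t → A s t = 0)
    (i j : Fin n) (hagree : ∀ s t, ¬ (s = i ∧ t = j) → A s t = B s t) :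
    ∀ (l : ℕ) (u : Fin n), (l : ℕ∞) ≤ G.edist i u → ∀ c,
      gcnForward φ d W1 W2 b A X l u c = gcnForward φ d W1 W2 b B X l u c := by
  intro l
  induction l with
  | zero => intro u _ c; rfl
  | succ l ih =>
    intro u hu c
    have hui : u ≠ i := by
      rintro rfl
      simp at hu
    have hself : (l : ℕ∞) ≤ G.edist i u := le_trans (by exact_mod_cast Nat.le_succ l) hu
    have hnbr : ∀ w, G.Adj u w → (l : ℕ∞) ≤ G.edist i w := by
      intro w hw
      have h1 : G.edist i u ≤ G.edist i w + G.edist w u := G.edist_triangle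
      rw [SimpleGraph.edist_eq_one_iff_adj.mpr hw.symm] at h1
      have h2 : (l : ℕ∞) + 1 ≤ G.edist i w + 1 := le_trans (by exact_mod_cast hu) h1
      exact (ENat.add_le_add_iff_right ENat.one_ne_top).mp h2
    have hagg : ∀ c', (A * gcnForward φ d W1 W2 b A X l) u c'
        = (B * gcnForward φ d W1 W2 b B X l) u c' := by
      intro c'
      simp only [Matrix.mul_apply]
      refine Finset.sum_congr rfl fun w _ => ?_
      rw [← hagree u w fun h => hui h.1]
      by_cases hw : u = w
      · rw [← hw, ih u hself]
      · by_cases hadj : G.Adj u w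
        · rw [ih w (hnbr w hadj)]
        · rw [hA u w hw hadj, zero_mul, zero_mul]
    simp only [gcnForward, Matrix.of_apply]
    rw [Matrix.mul_apply, Matrix.mul_apply, Matrix.mul_apply, Matrix.mul_apply]
    simp only [hagg, ih u hself]

/-- Let `W_0` be an initialization independent of `A` and
`W_{t+1}(A) = W_t(A) - Q_t (W_t(A), ∇_W F_in (W_t(A), A))` be gradient-based
iterates (the gradient being recorded as the Fréchet derivative of
`W ↦ F_in (W, A)`).  If `A, A'` are supported on `G`, agree except possibly at
the entry `(i,j)`, and `i, j` are at least `k` hops from every node of `V_tr`,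
then `W_t(A) = W_t(A')` for all `t`; in particular the derivative of `W_t(A)`
with respect to the entry `A i j` is zero. -/
theorem gcn_inner_iterates_independent_of_far_edges
    {n : ℕ} (φ : ℝ → ℝ) (hφ : Differentiable ℝ φ) (d : ℕ → ℕ) (k : ℕ)
    (ℓ : (Fin (d k) → ℝ) → ℝ → ℝ)
    (hℓ : Differentiable ℝ fun p : (Fin (d k) → ℝ) × ℝ => ℓ p.1 p.2)
    (X : Matrix (Fin n) (Fin (d 0)) ℝ)
    (Yobs : Fin n → ℝ) (Vtr : Finset (Fin n))
    (G : SimpleGraph (Fin n))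
    (A A' : Matrix (Fin n) (Fin n) ℝ)
    (hA : ∀ s t, s ≠ t → ¬ G.Adj s t → A s t = 0)
    (hA' : ∀ s t, s ≠ t → ¬ G.Adj s t → A' s t = 0)
    (i j : Fin n)
    (hagree : ∀ s t, ¬ (s = i ∧ t = j) → A s t = A' s t)
    (hi : ∀ v ∈ Vtr, (k : ℕ∞) ≤ G.edist i v)
    (hj : ∀ v ∈ Vtr, (k : ℕ∞) ≤ G.edist j v)
    (Q : ℕ → GCNParams d k → (GCNParams d k →L[ℝ] ℝ) → GCNParams d k)
    (W0 : GCNParams d k)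
    (Wseq : Matrix (Fin n) (Fin n) ℝ → ℕ → GCNParams d k)
    (hW0 : ∀ B, Wseq B 0 = W0)
    (hWstep : ∀ B t, Wseq B (t + 1) =
      Wseq B t - Q t (Wseq B t)
        (fderiv ℝ (fun W => Finner φ d k ℓ X Yobs Vtr W B) (Wseq B t))) :
    (∀ t : ℕ, Wseq A t = Wseq A' t) ∧
    (∀ t : ℕ,
      deriv (fun θ : ℝ =>
          Wseq (Matrix.of fun s t' => if s = i ∧ t' = j then θ else A s t') t)
        (A i j) = 0) := by
  have key : ∀ B : Matrix (Fin n) (Fin n) ℝ,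
      (∀ s t, ¬ (s = i ∧ t = j) → A s t = B s t) → ∀ t, Wseq A t = Wseq B t := by
    intro B hB
    have hF : (fun W => Finner φ d k ℓ X Yobs Vtr W A)
        = fun W => Finner φ d k ℓ X Yobs Vtr W B := by
      funext W
      unfold Finner
      congr 1
      refine Finset.sum_congr rfl fun u hu => ?_
      congr 1
      funext c
      exact gcnForward_eq_of_le_edist φ d _ _ _ X G A B hA i j hB k u (hi u hu) c
    intro t
    induction t with
    | zero => rw [hW0, hW0]
    | succ t ih => rw [hWstep, hWstep, hF, ih]
  refine ⟨key A' hagree, fun t => ?_⟩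
  have hconst : (fun θ : ℝ =>
      Wseq (Matrix.of fun s t' => if s = i ∧ t' = j then θ else A s t') t)
        = fun _ => Wseq A t := by
    funext θ
    refine (key _ (fun s t' h => ?_) t).symm
    simp only [Matrix.of_apply, if_neg h]
  rw [hconst]
  exact deriv_const _ _
end

section
/- Fix a differentiable nonlinearity φ, a differentiable loss ℓ, two disjoint labelled node sets V_tr and V_out with labels (Y_obs)_u, and define F_in(W,A) = (1/|V_tr|) Σ_{u∈V_tr} ℓ((Y_W(X,A))_u, (Y_obs)_u). Let W_t(A) be obtained by t steps of a gradient-based iteration W_{s+1}(A) = W_s(A) − Q_s(W_s(A), ∇_W F_in(W_s(A), A)) from an initialization W_0 independent of A, and define the outer objective F_out(A) = (1/|V_out|) Σ_{u∈V_out} ℓ((Y_{W_t(A)}(X,A))_u, (Y_obs)_u). Let G be a graph on the n nodes, and let A and A' both be supported on G, agreeing on every entry except possibly the entry (i,j), where nodes i and j both satisfy dist_G(i,v) ≥ k and dist_G(j,v) ≥ k for every v ∈ V_tr ∪ V_out. Then F_out(A) = F_out(A'); in particular the hypergradient ∂F_out/∂A_{ij} is zero. -/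
/-!
The proof is a receptive-field argument. One GCN layer at node `u` reads row `u` of `A` and the
previous layer at `u` and at the neighbours of `u`. Hence if `A` is supported on `G` and `B` agrees
with `A` off the entry `(i, j)`, the outputs after `l` layers agree at every node at distance at
least `l` from `i` (`gcnForward_congr`, by induction on `l`): a node at distance at least `l + 1`
is not `i`, so its row is the same in `A` and `B`, and all its neighbours are at distance at least
`l`.

With `l = k` this makes the inner objectives `W ↦ F_in (W, A)` and `W ↦ F_in (W, B)` equal as
functions, so their gradients, and inductively the whole training trajectories, coincide
(`Wseq_congr`). The outer objectives then coincide as well. The matrix `B` need not be supported on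
`G`, so the argument covers every value `θ` of the entry `(i, j)`, edge or not: the outer objective
is a constant function of `θ` and its derivative vanishes.
-/

/-!
STATEMENT 2: the bilevel outer objective `F_out`, evaluated at GCN weights obtained
by `t` gradient-based inner iterations, does not depend on the entry `A i j` when
`i` and `j` are at least `k` hops from every labelled node in `V_tr ∪ V_out`;
in particular the hypergradient on such an edge is zero.
-/

open scoped BigOperators

attribute [local instance] Matrix.normedAddCommGroup Matrix.normedSpace

/-- The outer objective
`F_out (A) = (1/|V_out|) ∑_{u ∈ V_out} ℓ ((Y_{W_t(A)} (X, A))_u, (Y_obs)_u)`,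
for given trained weights `W`. -/
noncomputable def Fouter {n : ℕ} (φ : ℝ → ℝ) (d : ℕ → ℕ) (k : ℕ)
    (ℓ : (Fin (d k) → ℝ) → ℝ → ℝ) (X : Matrix (Fin n) (Fin (d 0)) ℝ)
    (Yobs : Fin n → ℝ) (Vout : Finset (Fin n))
    (W : GCNParams d k) (A : Matrix (Fin n) (Fin n) ℝ) : ℝ :=
  (Vout.card : ℝ)⁻¹ *
    ∑ u ∈ Vout, ℓ (fun c => gcnForward φ d (pW1 W) (pW2 W) (pB W) A X k u c) (Yobs u)

/-- After `l` layers, changing the entry `(i, j)` is invisible at distance at least `l` from `i`.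
Only the unperturbed matrix `A` has to be supported on `G`. -/
theorem gcnForward_congr {n : ℕ} (φ : ℝ → ℝ) (d : ℕ → ℕ)
    (W1 W2 : ∀ l : ℕ, Matrix (Fin (d l)) (Fin (d (l + 1))) ℝ)
    (b : ∀ l : ℕ, Fin (d (l + 1)) → ℝ) (X : Matrix (Fin n) (Fin (d 0)) ℝ)
    (G : SimpleGraph (Fin n)) (A B : Matrix (Fin n) (Fin n) ℝ)
    (hA : ∀ s t, s ≠ t → ¬ G.Adj s t → A s t = 0) (i j : Fin n)
    (hagree : ∀ s t, ¬ (s = i ∧ t = j) → A s t = B s t) (l : ℕ) :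
    ∀ u, (l : ℕ∞) ≤ G.edist i u → ∀ c,
      gcnForward φ d W1 W2 b A X l u c = gcnForward φ d W1 W2 b B X l u c := by
  induction l with
  | zero => intro u _ c; rfl
  | succ l ih =>
    intro u hu c
    have hul : (l : ℕ∞) ≤ G.edist i u := le_trans (by exact_mod_cast Nat.le_succ l) hu
    have hne : u ≠ i := by
      rintro rfl
      simp at hu
    have hself : ∀ c', gcnForward φ d W1 W2 b A X l u c' = gcnForward φ d W1 W2 b B X l u c' :=
      ih u hul
    have hagg : ∀ c', (A * gcnForward φ d W1 W2 b A X l) u c' =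
        (B * gcnForward φ d W1 W2 b B X l) u c' := by
      intro c'
      simp only [Matrix.mul_apply]
      refine Finset.sum_congr rfl fun w _ => ?_
      rw [← hagree u w fun h => hne h.1]
      by_cases huw : u = w
      · rw [← huw, hself]
      by_cases hadj : G.Adj u w
      · have htri : G.edist i u ≤ G.edist i w + 1 := by
          have h := G.edist_triangle (u := i) (v := w) (w := u)
          rwa [SimpleGraph.edist_eq_one_iff_adj.2 hadj.symm] at h
        have hw : (l : ℕ∞) ≤ G.edist i w := by
          have h : (l : ℕ∞) + 1 ≤ G.edist i w + 1 := le_trans (by exact_mod_cast hu) htri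
          exact (ENat.add_le_add_iff_right ENat.one_ne_top).1 h
        rw [ih w hw]
      · simp [hA u w huw hadj]
    simp only [gcnForward, Matrix.of_apply]
    rw [Matrix.mul_apply, Matrix.mul_apply, Matrix.mul_apply, Matrix.mul_apply]
    simp only [hself, hagg]

/-- If the inner objectives of `A` and `B` coincide as functions of the weights, then so do the
gradient-based iterates. -/
theorem Wseq_congr {n : ℕ} (φ : ℝ → ℝ) (d : ℕ → ℕ) (k : ℕ)
    (ℓ : (Fin (d k) → ℝ) → ℝ → ℝ) (X : Matrix (Fin n) (Fin (d 0)) ℝ)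
    (Yobs : Fin n → ℝ) (Vtr : Finset (Fin n)) (A B : Matrix (Fin n) (Fin n) ℝ)
    (hF : (fun W => Finner φ d k ℓ X Yobs Vtr W A) = fun W => Finner φ d k ℓ X Yobs Vtr W B)
    (Q : ℕ → GCNParams d k → (GCNParams d k →L[ℝ] ℝ) → GCNParams d k)
    (W0 : GCNParams d k)
    (Wseq : Matrix (Fin n) (Fin n) ℝ → ℕ → GCNParams d k)
    (hW0 : ∀ B, Wseq B 0 = W0)
    (hWstep : ∀ B s, Wseq B (s + 1) =
      Wseq B s - Q s (Wseq B s)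
        (fderiv ℝ (fun W => Finner φ d k ℓ X Yobs Vtr W B) (Wseq B s)))
    (t : ℕ) : Wseq A t = Wseq B t := by
  induction t with
  | zero => rw [hW0, hW0]
  | succ s ih => rw [hWstep, hWstep, hF, ih]

/-- hypergradient scarcity for GCNs, bilevel setting.
Let `W_t(A)` be inner gradient-based iterates for `F_in` from an initialization
independent of `A`, and let `F_out (A)` penalize the classification error of
`Y_{W_t(A)}(X, A)` on `V_out`, disjoint from `V_tr`.  If `A, A'` are supported
on `G`, agree except possibly at the entry `(i,j)`, and `i, j` are at least `k`
hops from every node of `V_tr ∪ V_out`, then `F_out (A) = F_out (A')`; in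
particular the hypergradient `∂F_out/∂A_{ij}` is zero. -/
theorem gcn_bilevel_hypergradient_scarcity
    {n : ℕ} (φ : ℝ → ℝ) (hφ : Differentiable ℝ φ) (d : ℕ → ℕ) (k : ℕ)
    (ℓ : (Fin (d k) → ℝ) → ℝ → ℝ)
    (hℓ : Differentiable ℝ fun p : (Fin (d k) → ℝ) × ℝ => ℓ p.1 p.2)
    (X : Matrix (Fin n) (Fin (d 0)) ℝ)
    (Yobs : Fin n → ℝ) (Vtr Vout : Finset (Fin n))
    (hdisj : Disjoint Vtr Vout)
    (G : SimpleGraph (Fin n))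
    (A A' : Matrix (Fin n) (Fin n) ℝ)
    (hA : ∀ s t, s ≠ t → ¬ G.Adj s t → A s t = 0)
    (hA' : ∀ s t, s ≠ t → ¬ G.Adj s t → A' s t = 0)
    (i j : Fin n)
    (hagree : ∀ s t, ¬ (s = i ∧ t = j) → A s t = A' s t)
    (hi : ∀ v ∈ Vtr ∪ Vout, (k : ℕ∞) ≤ G.edist i v)
    (hj : ∀ v ∈ Vtr ∪ Vout, (k : ℕ∞) ≤ G.edist j v)
    (Q : ℕ → GCNParams d k → (GCNParams d k →L[ℝ] ℝ) → GCNParams d k)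
    (W0 : GCNParams d k)
    (Wseq : Matrix (Fin n) (Fin n) ℝ → ℕ → GCNParams d k)
    (hW0 : ∀ B, Wseq B 0 = W0)
    (hWstep : ∀ B s, Wseq B (s + 1) =
      Wseq B s - Q s (Wseq B s)
        (fderiv ℝ (fun W => Finner φ d k ℓ X Yobs Vtr W B) (Wseq B s)))
    (t : ℕ) :
    Fouter φ d k ℓ X Yobs Vout (Wseq A t) A =
      Fouter φ d k ℓ X Yobs Vout (Wseq A' t) A' ∧
    deriv (fun θ : ℝ =>
        Fouter φ d k ℓ X Yobs Vout
          (Wseq (Matrix.of fun s t' => if s = i ∧ t' = j then θ else A s t') t)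
          (Matrix.of fun s t' => if s = i ∧ t' = j then θ else A s t'))
      (A i j) = 0 := by
  have key : ∀ B : Matrix (Fin n) (Fin n) ℝ, (∀ s t, ¬ (s = i ∧ t = j) → A s t = B s t) →
      Fouter φ d k ℓ X Yobs Vout (Wseq A t) A = Fouter φ d k ℓ X Yobs Vout (Wseq B t) B := by
    intro B hB
    have hfwd : ∀ (W : GCNParams d k), ∀ u ∈ Vtr ∪ Vout, ∀ c,
        gcnForward φ d (pW1 W) (pW2 W) (pB W) A X k u c =
          gcnForward φ d (pW1 W) (pW2 W) (pB W) B X k u c := fun W u hu =>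
      gcnForward_congr φ d _ _ _ X G A B hA i j hB k u (hi u hu)
    have hF : (fun W => Finner φ d k ℓ X Yobs Vtr W A) =
        fun W => Finner φ d k ℓ X Yobs Vtr W B := by
      funext W
      unfold Finner
      congr 1
      refine Finset.sum_congr rfl fun u hu => ?_
      simp only [hfwd W u (Finset.mem_union_left _ hu)]
    rw [Wseq_congr φ d k ℓ X Yobs Vtr A B hF Q W0 Wseq hW0 hWstep t]
    unfold Fouter
    congr 1
    refine Finset.sum_congr rfl fun u hu => ?_
    simp only [hfwd _ u (Finset.mem_union_right _ hu)]
  refine ⟨key A' hagree, ?_⟩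
  have hconst : (fun θ : ℝ =>
        Fouter φ d k ℓ X Yobs Vout
          (Wseq (Matrix.of fun s t' => if s = i ∧ t' = j then θ else A s t') t)
          (Matrix.of fun s t' => if s = i ∧ t' = j then θ else A s t')) =
      fun _ => Fouter φ d k ℓ X Yobs Vout (Wseq A t) A := by
    funext θ
    refine (key _ fun s t' h => ?_).symm
    rw [Matrix.of_apply, if_neg h]
  rw [hconst, deriv_const]
end

section
/- Assume G is connected and let Y_obs ∈ ℝ^n. Then the function Y ↦ (1/|V_tr|) Σ_{i∈V_tr} (Y_i − (Y_obs)_i)² + (λ/m) Yᵀ L Y on ℝ^n is strictly convex and attains its unique global minimum at Y(A) = B^{-1} S̃_in Y_obs, where B = S̃_in + λ L̃. -/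
/-! Expanding the squares shows that the objective equals
`Y ⬝ B Y - 2 Y ⬝ S̃ Y_obs + const` (`lapObj_eq`). The Laplacian form is
`½ ∑ A_{uv} (x_u - x_v)²` (`dotProduct_lapMat`), so if `x ⬝ B x = 0` then `x` is constant along
edges, hence constant by connectedness, and it vanishes on the nonempty set `Vtr`; thus `B` is
positive definite (`Bmat_posDef`). For a quadratic with positive definite Hessian, strict convexity
follows from `f(aX + bY) = a f(X) + b f(Y) - a b (X - Y) ⬝ B (X - Y)` when `a + b = 1`, and
since `B Y* = S̃ Y_obs`, completing the square gives `f(Y) = f(Y*) + (Y - Y*) ⬝ B (Y - Y*)`. -/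

/-! STATEMENT 8: the Laplacian-regularization objective
`Y ↦ (1/|V_tr|) ∑_{i ∈ V_tr} (Y_i - (Y_obs)_i)² + (λ/m) Yᵀ L Y` is strictly convex and
attains its unique global minimum at `Y(A) = B⁻¹ S̃_in Y_obs`. -/

open scoped BigOperators Matrix

/-- The (weighted) graph Laplacian `L = D - A` with degree matrix `D = diag (A 1ₙ)`. -/
noncomputable def lapMat {n : ℕ} (A : Matrix (Fin n) (Fin n) ℝ) :
    Matrix (Fin n) (Fin n) ℝ :=
  Matrix.diagonal (fun u => ∑ v, A u v) - A

/-- The diagonal 0/1 selection matrix of a set `V` of nodes. -/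
noncomputable def selMat {n : ℕ} (V : Finset (Fin n)) : Matrix (Fin n) (Fin n) ℝ :=
  Matrix.diagonal (fun u => if u ∈ V then 1 else 0)

/-- `S̃_in = S_in / |V_tr|`. -/
noncomputable def Stin {n : ℕ} (Vtr : Finset (Fin n)) : Matrix (Fin n) (Fin n) ℝ :=
  (Vtr.card : ℝ)⁻¹ • selMat Vtr

/-- `B = S̃_in + λ L̃` where `L̃ = L/m`. -/
noncomputable def Bmat {n : ℕ} (Vtr : Finset (Fin n)) (lam : ℝ) (m : ℕ)
    (A : Matrix (Fin n) (Fin n) ℝ) : Matrix (Fin n) (Fin n) ℝ :=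
  Stin Vtr + (lam / m) • lapMat A

/-- The Laplacian-regularization inner objective. -/
noncomputable def lapObj {n : ℕ} (Vtr : Finset (Fin n)) (lam : ℝ) (m : ℕ)
    (A : Matrix (Fin n) (Fin n) ℝ) (Yobs : Fin n → ℝ) (Y : Fin n → ℝ) : ℝ :=
  (Vtr.card : ℝ)⁻¹ * ∑ i ∈ Vtr, (Y i - Yobs i) ^ 2 +
    (lam / m) * (Y ⬝ᵥ (lapMat A).mulVec Y)

theorem dotProduct_lapMat {n : ℕ} {A : Matrix (Fin n) (Fin n) ℝ} (hsymm : A.IsSymm)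
    (x : Fin n → ℝ) :
    x ⬝ᵥ (lapMat A).mulVec x = (∑ u, ∑ v, A u v * (x u - x v) ^ 2) / 2 := by
  have h1 : x ⬝ᵥ (lapMat A).mulVec x
      = ∑ u, ∑ v, A u v * x u ^ 2 - ∑ u, ∑ v, A u v * (x u * x v) := by
    rw [lapMat, Matrix.sub_mulVec, dotProduct_sub]
    congr 1
    · simp only [dotProduct, Matrix.mulVec_diagonal, Finset.sum_mul, Finset.mul_sum]
      refine Finset.sum_congr rfl fun u _ => Finset.sum_congr rfl fun v _ => by ring
    · simp only [dotProduct, Matrix.mulVec, Finset.mul_sum]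
      refine Finset.sum_congr rfl fun u _ => Finset.sum_congr rfl fun v _ => by ring
  have h2 : ∑ u, ∑ v, A u v * x v ^ 2 = ∑ u, ∑ v, A u v * x u ^ 2 := by
    rw [Finset.sum_comm]
    refine Finset.sum_congr rfl fun u _ => Finset.sum_congr rfl fun v _ => ?_
    rw [hsymm.apply]
  have h3 : ∑ u, ∑ v, A u v * (x u - x v) ^ 2 = ∑ u, ∑ v, A u v * x u ^ 2
      - 2 * ∑ u, ∑ v, A u v * (x u * x v) + ∑ u, ∑ v, A u v * x v ^ 2 := by
    simp only [Finset.mul_sum, ← Finset.sum_add_distrib, ← Finset.sum_sub_distrib]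
    refine Finset.sum_congr rfl fun u _ => Finset.sum_congr rfl fun v _ => by ring
  rw [h1, h3, h2]
  ring

theorem dotProduct_Stin {n : ℕ} (Vtr : Finset (Fin n)) (x y : Fin n → ℝ) :
    x ⬝ᵥ (Stin Vtr).mulVec y = (Vtr.card : ℝ)⁻¹ * ∑ i ∈ Vtr, x i * y i := by
  rw [Stin, Matrix.smul_mulVec, dotProduct_smul, smul_eq_mul]
  simp [selMat, dotProduct, Matrix.mulVec_diagonal]

theorem dotProduct_Bmat {n : ℕ} (Vtr : Finset (Fin n)) (lam : ℝ) (m : ℕ)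
    (A : Matrix (Fin n) (Fin n) ℝ) (x : Fin n → ℝ) :
    x ⬝ᵥ (Bmat Vtr lam m A).mulVec x = (Vtr.card : ℝ)⁻¹ * ∑ i ∈ Vtr, x i * x i
      + lam / m * (x ⬝ᵥ (lapMat A).mulVec x) := by
  rw [Bmat, Matrix.add_mulVec, dotProduct_add, dotProduct_Stin, Matrix.smul_mulVec,
    dotProduct_smul, smul_eq_mul]

/-- The objective in the standard quadratic form `Y ⬝ B Y - 2 Y ⬝ b + const`, with `b = S̃ Y_obs`. -/
theorem lapObj_eq {n : ℕ} (Vtr : Finset (Fin n)) (lam : ℝ) (m : ℕ)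
    (A : Matrix (Fin n) (Fin n) ℝ) (Yobs Y : Fin n → ℝ) :
    lapObj Vtr lam m A Yobs Y = Y ⬝ᵥ (Bmat Vtr lam m A).mulVec Y
      - 2 * (Y ⬝ᵥ (Stin Vtr).mulVec Yobs) + Yobs ⬝ᵥ (Stin Vtr).mulVec Yobs := by
  have h : ∑ i ∈ Vtr, (Y i - Yobs i) ^ 2 = ∑ i ∈ Vtr, Y i * Y i
      - 2 * ∑ i ∈ Vtr, Y i * Yobs i + ∑ i ∈ Vtr, Yobs i * Yobs i := by
    simp only [Finset.mul_sum, ← Finset.sum_add_distrib, ← Finset.sum_sub_distrib]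
    exact Finset.sum_congr rfl fun i _ => by ring
  rw [lapObj, dotProduct_Bmat, dotProduct_Stin, dotProduct_Stin, h]
  ring

theorem Bmat_isSymm {n : ℕ} (Vtr : Finset (Fin n)) (lam : ℝ) (m : ℕ)
    {A : Matrix (Fin n) (Fin n) ℝ} (hsymm : A.IsSymm) : (Bmat Vtr lam m A).IsSymm := by
  unfold Bmat Stin selMat lapMat
  exact ((Matrix.isSymm_diagonal _).smul _).add (((Matrix.isSymm_diagonal _).sub hsymm).smul _)

theorem Bmat_posDef {n : ℕ} {G : SimpleGraph (Fin n)} {A : Matrix (Fin n) (Fin n) ℝ}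
    (hconn : G.Connected)
    (hsupp : ∀ u v, ¬ G.Adj u v → A u v = 0)
    (hpos : ∀ u v, G.Adj u v → 0 < A u v)
    (hsymm : A.IsSymm) {m : ℕ} (hm : 0 < m)
    {Vtr : Finset (Fin n)} (hVtr : Vtr.Nonempty) {lam : ℝ} (hlam : 0 < lam) :
    (Bmat Vtr lam m A).PosDef := by
  have hc : 0 < (Vtr.card : ℝ)⁻¹ := by
    have := hVtr.card_pos
    positivity
  have hl : 0 < lam / m := by positivity
  have hA : ∀ u v, 0 ≤ A u v := fun u v => by
    by_cases h : G.Adj u v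
    · exact (hpos u v h).le
    · exact (hsupp u v h).ge
  refine Matrix.PosDef.of_dotProduct_mulVec_pos ?_ fun x hx => ?_
  · rw [Matrix.IsHermitian, Matrix.conjTranspose_eq_transpose_of_trivial]
    exact Bmat_isSymm Vtr lam m hsymm
  rw [star_trivial, dotProduct_Bmat, dotProduct_lapMat hsymm]
  have hterm : ∀ u v, 0 ≤ A u v * (x u - x v) ^ 2 := fun u v =>
    mul_nonneg (hA u v) (sq_nonneg _)
  have hrow : ∀ u, 0 ≤ ∑ v, A u v * (x u - x v) ^ 2 := fun u =>
    Finset.sum_nonneg fun v _ => hterm u v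
  have hS : 0 ≤ ∑ i ∈ Vtr, x i * x i := Finset.sum_nonneg fun i _ => mul_self_nonneg _
  have hE : 0 ≤ ∑ u, ∑ v, A u v * (x u - x v) ^ 2 := Finset.sum_nonneg fun u _ => hrow u
  -- If either form is positive so is the sum; otherwise both vanish, which forces `x = 0`.
  rcases hE.lt_or_eq with hE' | hE'
  · positivity
  rcases hS.lt_or_eq with hS' | hS'
  · positivity
  refine absurd (funext fun w => ?_) hx
  have hadj : ∀ u v, G.Adj u v → x u = x v := fun u v huv => by
    have h1 := (Finset.sum_eq_zero_iff_of_nonneg fun u _ => hrow u).1 hE'.symm u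
      (Finset.mem_univ u)
    have h2 := (Finset.sum_eq_zero_iff_of_nonneg fun v _ => hterm u v).1 h1 v
      (Finset.mem_univ v)
    have h3 := (mul_eq_zero.1 h2).resolve_left (hpos u v huv).ne'
    exact sub_eq_zero.1 (pow_eq_zero_iff two_ne_zero |>.1 h3)
  have hwalk : ∀ u v, G.Walk u v → x u = x v := fun u v p => by
    induction p with
    | nil => rfl
    | cons h _ ih => exact (hadj _ _ h).trans ih
  obtain ⟨i, hi⟩ := hVtr
  have hxi : x i = 0 := mul_self_eq_zero.1
    ((Finset.sum_eq_zero_iff_of_nonneg fun i _ => mul_self_nonneg (x i)).1 hS'.symm i hi)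
  obtain ⟨p⟩ := hconn.preconnected w i
  exact (hwalk w i p).trans hxi

theorem Matrix.IsSymm.dotProduct_mulVec_swap {n : ℕ} {B : Matrix (Fin n) (Fin n) ℝ}
    (hB : B.IsSymm) (x y : Fin n → ℝ) : x ⬝ᵥ B.mulVec y = y ⬝ᵥ B.mulVec x := by
  rw [Matrix.dotProduct_mulVec, ← Matrix.mulVec_transpose, hB.eq, dotProduct_comm]

theorem laplacian_objective_strictConvex_unique_minimizer
    {n : ℕ} (G : SimpleGraph (Fin n)) (A : Matrix (Fin n) (Fin n) ℝ)
    (hconn : G.Connected)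
    (hsupp : ∀ u v, ¬ G.Adj u v → A u v = 0)
    (hpos : ∀ u v, G.Adj u v → 0 < A u v)
    (hsymm : A.IsSymm)
    (m : ℕ) (hmeq : m = G.edgeSet.ncard) (hm : 0 < m)
    (Vtr : Finset (Fin n)) (hVtr : Vtr.Nonempty)
    (lam : ℝ) (hlam : 0 < lam)
    (Yobs : Fin n → ℝ) :
    StrictConvexOn ℝ Set.univ (lapObj Vtr lam m A Yobs) ∧
    ∀ Y : Fin n → ℝ,
      Y ≠ (Bmat Vtr lam m A)⁻¹.mulVec ((Stin Vtr).mulVec Yobs) →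
      lapObj Vtr lam m A Yobs ((Bmat Vtr lam m A)⁻¹.mulVec ((Stin Vtr).mulVec Yobs)) <
        lapObj Vtr lam m A Yobs Y := by
  have hB := Bmat_posDef hconn hsupp hpos hsymm hm hVtr hlam
  have hcomm := (Bmat_isSymm Vtr lam m hsymm).dotProduct_mulVec_swap
  have hBpos : ∀ x y : Fin n → ℝ, x ≠ y →
      0 < (x - y) ⬝ᵥ (Bmat Vtr lam m A).mulVec (x - y) := fun x y hxy => by
    simpa using hB.dotProduct_mulVec_pos (sub_ne_zero.2 hxy)
  constructor
  · refine ⟨convex_univ, fun x _ y _ hxy a b ha hb hab => ?_⟩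
    have h := mul_pos (mul_pos ha hb) (hBpos x y hxy)
    obtain rfl : b = 1 - a := by linarith
    simp only [lapObj_eq, smul_eq_mul, Matrix.mulVec_add, Matrix.mulVec_sub, Matrix.mulVec_smul,
      dotProduct_add, add_dotProduct, dotProduct_sub, sub_dotProduct, dotProduct_smul,
      smul_dotProduct, hcomm y x] at h ⊢
    linarith
  · intro Y hY
    have h := hBpos _ _ hY
    have hdet : IsUnit (Bmat Vtr lam m A).det := hB.det_pos.ne'.isUnit
    set Ys := (Bmat Vtr lam m A)⁻¹.mulVec ((Stin Vtr).mulVec Yobs) with hYs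
    have hBY : (Stin Vtr).mulVec Yobs = (Bmat Vtr lam m A).mulVec Ys := by
      rw [hYs, Matrix.mulVec_mulVec, Matrix.mul_nonsing_inv _ hdet, Matrix.one_mulVec]
    rw [lapObj_eq, lapObj_eq, hBY]
    simp only [Matrix.mulVec_sub, dotProduct_sub, sub_dotProduct, hcomm Ys Y] at h
    linarith
end

section
/- Assume G is connected, let Y_obs ∈ ℝ^n, y_∞ = ‖Y_obs‖_∞, let μ_min ≤ μ_max be the smallest and largest eigenvalues of B, ν = 1 − μ_min/μ_max, B̃ = B/μ_max, and T_r = (I − B̃)^r μ_max^{-1} S̃_in Y_obs. Then for every r ≥ 0, the Euclidean norm satisfies ‖T_r‖ ≤ ν^r y_∞ / (μ_max √|V_tr|). -/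
/-!
The matrix `B` is real symmetric, so it has an orthonormal eigenbasis `bᵢ` with eigenvalues
`μᵢ ∈ [μmin, μmax]`. Testing the Rayleigh quotient on the all-ones vector, which the Laplacian
kills, gives `1 = 1ᵀ B 1 ≤ n μmax`, so `μmax > 0`. Hence `I - B/μmax` has eigenvalues
`1 - μᵢ/μmax ∈ [0, ν]`, and by Parseval it contracts the Euclidean norm by the factor `ν`
(`sum_sq_contract`). It remains to bound the `r = 0` term: `S̃_in Y_obs` has at most `|V_tr|` nonzero
entries of size at most `y_∞/|V_tr|`, so its norm is at most `y_∞/√|V_tr|` (`sum_sq_Stin_le`).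
-/

/-! STATEMENT 9: the Neumann series terms satisfy
`‖T_r‖ ≤ ν^r y_∞ / (μmax √|V_tr|)` in Euclidean norm, with `ν = 1 - μmin/μmax`. -/

open scoped BigOperators Matrix

/-- `T_r = (I - B̃)^r μmax⁻¹ S̃_in Y_obs`, the `r`-th term of the Neumann series of
`Y(A) = B⁻¹ S̃_in Y_obs`, where `B̃ = B/μmax`. -/
noncomputable def Tvec {n : ℕ} (Vtr : Finset (Fin n)) (lam : ℝ) (m : ℕ)
    (A : Matrix (Fin n) (Fin n) ℝ) (μmax : ℝ) (Yobs : Fin n → ℝ) (r : ℕ) :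
    Fin n → ℝ :=
  ((1 - μmax⁻¹ • Bmat Vtr lam m A) ^ r).mulVec (μmax⁻¹ • (Stin Vtr).mulVec Yobs)

lemma Bmat_isHermitian {n : ℕ} {A : Matrix (Fin n) (Fin n) ℝ} (hsymm : A.IsSymm)
    (Vtr : Finset (Fin n)) (lam : ℝ) (m : ℕ) : (Bmat Vtr lam m A).IsHermitian := by
  rw [Matrix.IsHermitian, Matrix.conjTranspose_eq_transpose_of_trivial]
  simp [Bmat, Stin, selMat, lapMat, Matrix.transpose_add, Matrix.transpose_sub,
    Matrix.transpose_smul, hsymm.eq]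

/-- Parseval's identity in an orthonormal basis, phrased with `dotProduct`. -/
lemma sum_dotProduct_mul {n : ℕ} (b : OrthonormalBasis (Fin n) ℝ (EuclideanSpace ℝ (Fin n)))
    (x y : Fin n → ℝ) :
    ∑ i, (((b i).ofLp ⬝ᵥ x) * ((b i).ofLp ⬝ᵥ y)) = x ⬝ᵥ y := by
  have h := b.sum_inner_mul_inner (WithLp.toLp 2 x) (WithLp.toLp 2 y)
  simp only [EuclideanSpace.inner_eq_star_dotProduct, star_trivial] at h
  rw [dotProduct_comm x y, ← h]
  exact Finset.sum_congr rfl fun i _ => by rw [dotProduct_comm y]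

lemma eigenvector_dotProduct_mulVec {n : ℕ} {B : Matrix (Fin n) (Fin n) ℝ} (hB : B.IsHermitian)
    (i : Fin n) (x : Fin n → ℝ) :
    (hB.eigenvectorBasis i).ofLp ⬝ᵥ (B *ᵥ x)
      = hB.eigenvalues i * ((hB.eigenvectorBasis i).ofLp ⬝ᵥ x) := by
  have ht : Bᵀ = B := by
    rw [← Matrix.conjTranspose_eq_transpose_of_trivial]; exact hB
  rw [Matrix.dotProduct_mulVec, ← Matrix.mulVec_transpose, ht, hB.mulVec_eigenvectorBasis,
    smul_dotProduct, smul_eq_mul]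

/-- The Rayleigh quotient of a symmetric matrix is at most any upper bound on its eigenvalues. -/
lemma dotProduct_mulVec_le {n : ℕ} {B : Matrix (Fin n) (Fin n) ℝ} (hB : B.IsHermitian)
    {c : ℝ} (hc : ∀ i, hB.eigenvalues i ≤ c) (x : Fin n → ℝ) :
    x ⬝ᵥ (B *ᵥ x) ≤ c * (x ⬝ᵥ x) := by
  rw [← sum_dotProduct_mul hB.eigenvectorBasis x (B *ᵥ x),
    ← sum_dotProduct_mul hB.eigenvectorBasis x x, Finset.mul_sum]
  refine Finset.sum_le_sum fun i _ => ?_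
  rw [eigenvector_dotProduct_mulVec]
  nlinarith [mul_le_mul_of_nonneg_right (hc i)
    (mul_self_nonneg ((hB.eigenvectorBasis i).ofLp ⬝ᵥ x))]

/-- If the eigenvalues of `B` lie in `[a, c]` with `c > 0`, then `I - B/c` contracts the
Euclidean norm by the factor `1 - a/c`. -/
lemma sum_sq_contract {n : ℕ} {B : Matrix (Fin n) (Fin n) ℝ} (hB : B.IsHermitian)
    {a c : ℝ} (hc0 : 0 < c) (ha : ∀ i, a ≤ hB.eigenvalues i) (hc : ∀ i, hB.eigenvalues i ≤ c)
    (x : Fin n → ℝ) :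
    ((1 - c⁻¹ • B) *ᵥ x) ⬝ᵥ ((1 - c⁻¹ • B) *ᵥ x) ≤ (1 - a / c) ^ 2 * (x ⬝ᵥ x) := by
  rw [← sum_dotProduct_mul hB.eigenvectorBasis ((1 - c⁻¹ • B) *ᵥ x) _,
    ← sum_dotProduct_mul hB.eigenvectorBasis x x, Finset.mul_sum]
  refine Finset.sum_le_sum fun i _ => ?_
  have h1 : (hB.eigenvectorBasis i).ofLp ⬝ᵥ ((1 - c⁻¹ • B) *ᵥ x)
      = (1 - hB.eigenvalues i / c) * ((hB.eigenvectorBasis i).ofLp ⬝ᵥ x) := by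
    rw [Matrix.sub_mulVec, Matrix.one_mulVec, Matrix.smul_mulVec, dotProduct_sub,
      dotProduct_smul, eigenvector_dotProduct_mulVec, smul_eq_mul]
    ring
  have h2 : 0 ≤ 1 - hB.eigenvalues i / c := by
    rw [sub_nonneg, div_le_one hc0]; exact hc i
  have h3 : 1 - hB.eigenvalues i / c ≤ 1 - a / c := by
    have := ha i
    gcongr
  have h4 := pow_le_pow_left₀ h2 h3 2
  rw [h1]
  nlinarith [mul_le_mul_of_nonneg_right h4
    (mul_self_nonneg ((hB.eigenvectorBasis i).ofLp ⬝ᵥ x))]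

/-- The all-ones vector is killed by the Laplacian, so only the `S̃_in` part of `B` sees it. -/
lemma one_dotProduct_Bmat {n : ℕ} (A : Matrix (Fin n) (Fin n) ℝ)
    {Vtr : Finset (Fin n)} (hVtr : Vtr.Nonempty) (lam : ℝ) (m : ℕ) :
    (1 : Fin n → ℝ) ⬝ᵥ (Bmat Vtr lam m A *ᵥ 1) = 1 := by
  have hL : lapMat A *ᵥ 1 = 0 := by
    ext u
    simp [lapMat, Matrix.mulVec, dotProduct, Matrix.diagonal_apply]
  have hV : (Vtr.card : ℝ) ≠ 0 := by exact_mod_cast hVtr.card_pos.ne'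
  rw [Bmat, Matrix.add_mulVec, Matrix.smul_mulVec, hL, smul_zero, add_zero, Stin,
    Matrix.smul_mulVec, dotProduct_smul]
  have : (1 : Fin n → ℝ) ⬝ᵥ (selMat Vtr *ᵥ 1) = Vtr.card := by
    simp [selMat, dotProduct, Matrix.mulVec_diagonal]
  rw [this, smul_eq_mul, inv_mul_cancel₀ hV]

lemma sum_sq_Stin_le {n : ℕ} {Vtr : Finset (Fin n)} (hVtr : Vtr.Nonempty) (Y : Fin n → ℝ) :
    (Stin Vtr *ᵥ Y) ⬝ᵥ (Stin Vtr *ᵥ Y) ≤ ‖Y‖ ^ 2 / Vtr.card := by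
  have hV : (0 : ℝ) < Vtr.card := by exact_mod_cast hVtr.card_pos
  have h1 : (Stin Vtr *ᵥ Y) ⬝ᵥ (Stin Vtr *ᵥ Y)
      = ((Vtr.card : ℝ)⁻¹) ^ 2 * ∑ u ∈ Vtr, Y u ^ 2 := by
    have h2 : (selMat Vtr *ᵥ Y) ⬝ᵥ (selMat Vtr *ᵥ Y) = ∑ u ∈ Vtr, Y u ^ 2 := by
      simp [selMat, dotProduct, Matrix.mulVec_diagonal, sq]
    rw [Stin, Matrix.smul_mulVec, dotProduct_smul, smul_dotProduct, h2, smul_eq_mul, smul_eq_mul]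
    ring
  have h3 : ∑ u ∈ Vtr, Y u ^ 2 ≤ Vtr.card * ‖Y‖ ^ 2 := by
    rw [← nsmul_eq_mul]
    refine Finset.sum_le_card_nsmul _ _ _ fun u _ => ?_
    rw [← sq_abs, ← Real.norm_eq_abs]
    gcongr
    exact norm_le_pi_norm Y u
  rw [h1]
  calc _ ≤ ((Vtr.card : ℝ)⁻¹) ^ 2 * (Vtr.card * ‖Y‖ ^ 2) := by gcongr
    _ = _ := by field_simp

theorem neumann_term_norm_bound
    {n : ℕ} (G : SimpleGraph (Fin n)) (A : Matrix (Fin n) (Fin n) ℝ)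
    (hconn : G.Connected)
    (hsupp : ∀ u v, ¬ G.Adj u v → A u v = 0)
    (hpos : ∀ u v, G.Adj u v → 0 < A u v)
    (hsymm : A.IsSymm)
    (m : ℕ) (hmeq : m = G.edgeSet.ncard) (hm : 0 < m)
    (Vtr : Finset (Fin n)) (hVtr : Vtr.Nonempty)
    (lam : ℝ) (hlam : 0 < lam)
    (μmin μmax : ℝ)
    (hmin_mem : ∃ x : Fin n → ℝ, x ≠ 0 ∧ (Bmat Vtr lam m A).mulVec x = μmin • x)
    (hmin_le : ∀ (μ : ℝ) (x : Fin n → ℝ), x ≠ 0 →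
      (Bmat Vtr lam m A).mulVec x = μ • x → μmin ≤ μ)
    (hmax_mem : ∃ x : Fin n → ℝ, x ≠ 0 ∧ (Bmat Vtr lam m A).mulVec x = μmax • x)
    (hmax_ge : ∀ (μ : ℝ) (x : Fin n → ℝ), x ≠ 0 →
      (Bmat Vtr lam m A).mulVec x = μ • x → μ ≤ μmax)
    (Yobs : Fin n → ℝ) :
    ∀ r : ℕ,
      Real.sqrt (∑ a, (Tvec Vtr lam m A μmax Yobs r a) ^ 2) ≤
        (1 - μmin / μmax) ^ r * ‖Yobs‖ / (μmax * Real.sqrt (Vtr.card : ℝ)) := by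
  intro r
  have hB := Bmat_isHermitian hsymm Vtr lam m
  have hne : ∀ i, (hB.eigenvectorBasis i).ofLp ≠ 0 := fun i h =>
    hB.eigenvectorBasis.orthonormal.ne_zero i (by ext j; simp [h])
  have hlo : ∀ i, μmin ≤ hB.eigenvalues i := fun i =>
    hmin_le _ _ (hne i) (hB.mulVec_eigenvectorBasis i)
  have hhi : ∀ i, hB.eigenvalues i ≤ μmax := fun i =>
    hmax_ge _ _ (hne i) (hB.mulVec_eigenvectorBasis i)
  have hμ : 0 < μmax := by
    have h := dotProduct_mulVec_le hB hhi 1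
    rw [one_dotProduct_Bmat A hVtr] at h
    by_contra! hneg
    have h0 : (0 : ℝ) ≤ (1 : Fin n → ℝ) ⬝ᵥ 1 := by simp [dotProduct]
    nlinarith
  have hν : 0 ≤ 1 - μmin / μmax := by
    obtain ⟨x, hx, hBx⟩ := hmin_mem
    rw [sub_nonneg, div_le_one hμ]
    exact hmax_ge _ x hx hBx
  have hV : (0 : ℝ) < Vtr.card := by exact_mod_cast hVtr.card_pos
  have key : Tvec Vtr lam m A μmax Yobs r ⬝ᵥ Tvec Vtr lam m A μmax Yobs r
      ≤ ((1 - μmin / μmax) ^ r) ^ 2 * (μmax⁻¹ ^ 2 * (‖Yobs‖ ^ 2 / Vtr.card)) := by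
    induction r with
    | zero =>
      have h := sum_sq_Stin_le hVtr Yobs
      simp only [Tvec, pow_zero, Matrix.one_mulVec, dotProduct_smul, smul_dotProduct, smul_eq_mul,
        one_pow, one_mul]
      rw [← mul_assoc, ← sq]
      gcongr
    | succ k ih =>
      have hstep : Tvec Vtr lam m A μmax Yobs (k + 1)
          = (1 - μmax⁻¹ • Bmat Vtr lam m A) *ᵥ Tvec Vtr lam m A μmax Yobs k := by
        rw [Tvec, Tvec, Matrix.mulVec_mulVec, ← pow_succ']
      rw [hstep]
      calc _ ≤ _ := sum_sq_contract hB hμ hlo hhi _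
        _ ≤ _ := mul_le_mul_of_nonneg_left ih (sq_nonneg _)
        _ = _ := by ring
  refine Real.sqrt_le_iff.mpr ⟨by positivity, ?_⟩
  calc ∑ a, (Tvec Vtr lam m A μmax Yobs r a) ^ 2
      = Tvec Vtr lam m A μmax Yobs r ⬝ᵥ Tvec Vtr lam m A μmax Yobs r := by
        simp [dotProduct, sq]
    _ ≤ _ := key
    _ = _ := by
        rw [div_pow, mul_pow, mul_pow, Real.sq_sqrt hV.le]
        field_simp
end

section
/- Assume G is connected, let Y_obs ∈ ℝ^n, let μ_max be the largest eigenvalue of B, B̃ = B/μ_max, and T_r = (I − B̃)^r μ_max^{-1} S̃_in Y_obs. If a node u satisfies dist_G(u,v) > r for every v ∈ V_tr, then (T_r)_u = 0. -/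
/-!
The matrix `I - B/μmax` is a diagonal matrix plus a multiple of `A`, so its entry at `(u, w)` vanishes
unless `u = w` or `u` and `w` are adjacent: one multiplication by it moves information by at most one
hop. The vector `μmax⁻¹ S̃_in Y_obs` is supported on `V_tr`, so by induction on `r`
(`pow_mulVec_eq_zero_of_far`) applying the `r`-th power gives a vector supported within distance `r`
of `V_tr`.
-/

/-! STATEMENT 12: the Neumann series term `T_r` vanishes at nodes `u` that are more
than `r` hops from every node of `V_tr`. -/

open scoped BigOperators Matrix

/-- If `M` couples each node only to itself and its neighbours, then `M ^ r *ᵥ x` is supported within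
distance `r` of any set `V` outside which `x` vanishes. -/
lemma pow_mulVec_eq_zero_of_far {n : ℕ} (G : SimpleGraph (Fin n)) (M : Matrix (Fin n) (Fin n) ℝ)
    (hM : ∀ u w, u ≠ w → ¬ G.Adj u w → M u w = 0)
    (V : Finset (Fin n)) (x : Fin n → ℝ) (hx : ∀ u, u ∉ V → x u = 0) :
    ∀ (r : ℕ) (u : Fin n), (∀ v ∈ V, (r : ℕ∞) < G.edist u v) → (M ^ r).mulVec x u = 0 := by
  intro r
  induction r with
  | zero =>
    intro u hu
    have huV : u ∉ V := fun h => by simpa using hu u h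
    simpa using hx u huV
  | succ r ih =>
    intro u hu
    rw [pow_succ', ← Matrix.mulVec_mulVec]
    change ∑ w, M u w * (M ^ r).mulVec x w = 0
    refine Finset.sum_eq_zero fun w _ => ?_
    by_cases hw : G.edist u w ≤ 1
    · -- By the triangle inequality, `w` is farther than `r` from `V`.
      rw [ih w fun v hv => ?_, mul_zero]
      by_contra! hle
      have h := (G.edist_triangle (u := u) (v := w) (w := v)).trans (add_le_add hw hle)
      refine absurd (hu v hv) (not_lt.mpr ?_)
      rw [Nat.cast_add, Nat.cast_one, add_comm]
      exact h
    · rw [hM u w ?_ ?_, zero_mul]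
      · rintro rfl
        simp at hw
      · intro h
        exact hw (by simpa using G.edist_le h.toWalk)

lemma one_sub_Bmat_apply_eq_zero {n : ℕ} (G : SimpleGraph (Fin n)) (A : Matrix (Fin n) (Fin n) ℝ)
    (hsupp : ∀ u v, ¬ G.Adj u v → A u v = 0) (m : ℕ) (Vtr : Finset (Fin n)) (lam μ : ℝ)
    (u w : Fin n) (hne : u ≠ w) (hadj : ¬ G.Adj u w) :
    (1 - μ⁻¹ • Bmat Vtr lam m A) u w = 0 := by
  simp [Bmat, Stin, selMat, lapMat, hne, hsupp u w hadj]

theorem neumann_term_eq_zero_of_far_from_Vtr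
    {n : ℕ} (G : SimpleGraph (Fin n)) (A : Matrix (Fin n) (Fin n) ℝ)
    (hconn : G.Connected)
    (hsupp : ∀ u v, ¬ G.Adj u v → A u v = 0)
    (hpos : ∀ u v, G.Adj u v → 0 < A u v)
    (hsymm : A.IsSymm)
    (m : ℕ) (hmeq : m = G.edgeSet.ncard) (hm : 0 < m)
    (Vtr : Finset (Fin n)) (hVtr : Vtr.Nonempty)
    (lam : ℝ) (hlam : 0 < lam)
    (μmax : ℝ)
    (hmax_mem : ∃ x : Fin n → ℝ, x ≠ 0 ∧ (Bmat Vtr lam m A).mulVec x = μmax • x)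
    (hmax_ge : ∀ (μ : ℝ) (x : Fin n → ℝ), x ≠ 0 →
      (Bmat Vtr lam m A).mulVec x = μ • x → μ ≤ μmax)
    (Yobs : Fin n → ℝ) :
    ∀ (r : ℕ) (u : Fin n), (∀ v ∈ Vtr, (r : ℕ∞) < G.edist u v) →
      Tvec Vtr lam m A μmax Yobs r u = 0 := by
  exact pow_mulVec_eq_zero_of_far G _
    (one_sub_Bmat_apply_eq_zero G A hsupp m Vtr lam μmax) Vtr _ fun u hu => by
      simp [Stin, selMat, Matrix.smul_mulVec, Matrix.mulVec_diagonal, hu]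
end

section
/- Assume G is connected, let Y_obs ∈ ℝ^n, and fix positive constants m (the edge count of G) and μ_max ≥ the largest eigenvalue of B(A) = S̃_in + (λ/m) L(A). For a symmetric matrix variable A, define T_r(A) = (I − B(A)/μ_max)^r μ_max^{-1} S̃_in Y_obs, and consider the derivative of (T_r(A))_u along the symmetric perturbation of the single entry pair (A_{ij}, A_{ji}) (with μ_max and m held fixed). Then ∂(T_r)_u/∂A_{ij} = −(λ/(m μ_max)) Σ_{h=1}^{r} [ ((I−B̃)^{r−h})_{ui} (T_{h−1})_i + ((I−B̃)^{r−h})_{uj} (T_{h−1})_j − ((I−B̃)^{r−h})_{uj} (T_{h−1})_i − ((I−B̃)^{r−h})_{ui} (T_{h−1})_j ], where B̃ = B(A)/μ_max. -/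
/-!
The perturbation enters linearly: by symmetry of `A`,
`L (pert A i j θ) = L A + (θ - A i j) • d dᵀ` with `d = eᵢ - eⱼ` (`lapMat_pert`), so
`I - B̃` becomes the affine path `M + (θ - A i j) • C` with `C = -(λ / (m μmax)) • d dᵀ`.
The noncommutative power rule gives the derivative of `(M + (θ - a) • C) ^ r v` at `a` as
`∑_{h < r} M ^ (r - 1 - h) C M ^ h v` (`hasDerivAt_pow_mulVec`), and expanding the rank-one `C`
yields the four terms of the formula. When `i = j` both sides vanish since `d = 0`.
-/

/-! STATEMENT 14: exact formula for the derivative of the Neumann series term `(T_r)_u`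
along the symmetric perturbation of the entry pair `(A i j, A j i)`, with `m` and
`μmax` held fixed. -/

open scoped BigOperators Matrix

/-- Symmetric perturbation of the entry pair `(A i j, A j i)` of `A` to the value `θ`. -/
noncomputable def pert {n : ℕ} (A : Matrix (Fin n) (Fin n) ℝ) (i j : Fin n) (θ : ℝ) :
    Matrix (Fin n) (Fin n) ℝ :=
  Matrix.of fun s t => if (s = i ∧ t = j) ∨ (s = j ∧ t = i) then θ else A s t

/-- Also valid for `i = j`: a diagonal entry cancels in `D - A`, and the rank-one term is zero. -/
lemma lapMat_pert {n : ℕ} (A : Matrix (Fin n) (Fin n) ℝ) (hsymm : A.IsSymm) (i j : Fin n)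
    (θ : ℝ) :
    lapMat (pert A i j θ) = lapMat A + (θ - A i j) •
      Matrix.vecMulVec (Pi.single i 1 - Pi.single j 1) (Pi.single i 1 - Pi.single j 1) := by
  have hA : A j i = A i j := hsymm.apply i j
  have hp : ∀ s t, pert A i j θ s t = A s t + (θ - A i j) *
      (if (s = i ∧ t = j) ∨ (s = j ∧ t = i) then 1 else 0) := by
    intro s t
    unfold pert
    simp only [Matrix.of_apply]
    split_ifs with h
    · rcases h with ⟨rfl, rfl⟩ | ⟨rfl, rfl⟩
      · ring
      · rw [hA]; ring
    · ring
  have hs : ∀ s, ∑ t, (if (s = i ∧ t = j) ∨ (s = j ∧ t = i) then (1 : ℝ) else 0) =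
      if i = j then (if s = i then 1 else 0)
      else (if s = i then 1 else 0) + (if s = j then 1 else 0) := by
    intro s
    by_cases hij : i = j
    · subst hij
      by_cases h1 : s = i <;> simp [h1]
    · by_cases h1 : s = i
      · subst h1
        simp [hij]
      · by_cases h2 : s = j <;> simp [h1, h2, hij, Ne.symm hij]
  ext s t
  simp only [lapMat, Matrix.sub_apply, Matrix.add_apply, Matrix.smul_apply, Matrix.diagonal_apply,
    hp, Finset.sum_add_distrib, ← Finset.mul_sum, hs, Matrix.vecMulVec_apply, Pi.sub_apply,
    Pi.single_apply, smul_eq_mul]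
  grind

/-- Noncommutative power rule along an affine path of matrices, applied to a vector and read
entrywise, so that no choice of matrix norm is involved. -/
lemma hasDerivAt_pow_mulVec {n : ℕ} (M C : Matrix (Fin n) (Fin n) ℝ) (v : Fin n → ℝ) (a : ℝ)
    (r : ℕ) : ∀ u, HasDerivAt (fun θ : ℝ => ((M + (θ - a) • C) ^ r).mulVec v u)
      (∑ h ∈ Finset.range r, (M ^ (r - 1 - h)).mulVec (C.mulVec ((M ^ h).mulVec v)) u) a := by
  induction r with
  | zero => intro u; simpa using hasDerivAt_const a (v u)
  | succ r ih =>
    intro u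
    have hentry : ∀ w, HasDerivAt (fun θ : ℝ => (M + (θ - a) • C) u w) (C u w) a := by
      intro w
      simpa using (((hasDerivAt_id a).sub_const a).mul_const (C u w)).const_add (M u w)
    have key := HasDerivAt.fun_sum (u := Finset.univ)
      (fun w _ => (hentry w).mul (ih w))
    have hfun : (fun θ : ℝ => ((M + (θ - a) • C) ^ (r + 1)).mulVec v u) = fun θ : ℝ =>
        ∑ w, (M + (θ - a) • C) u w * ((M + (θ - a) • C) ^ r).mulVec v w := by
      funext θ
      rw [pow_succ', ← Matrix.mulVec_mulVec]
      rfl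
    rw [hfun]
    refine key.congr_deriv ?_
    rw [Finset.sum_range_succ, Finset.sum_add_distrib, add_comm]
    congr 1
    · simp only [Finset.mul_sum, sub_self, zero_smul, add_zero]
      rw [Finset.sum_comm]
      refine Finset.sum_congr rfl fun h hh => ?_
      have hr : r + 1 - 1 - h = (r - 1 - h) + 1 := by
        have := Finset.mem_range.1 hh
        omega
      rw [hr, pow_succ', ← Matrix.mulVec_mulVec]
      rfl
    · simp only [sub_self, zero_smul, add_zero, Nat.add_sub_cancel, Nat.sub_self, pow_zero,
        Matrix.one_mulVec]
      rfl

theorem neumann_term_deriv_formula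
    {n : ℕ} (G : SimpleGraph (Fin n)) (A : Matrix (Fin n) (Fin n) ℝ)
    (hconn : G.Connected)
    (hsupp : ∀ u v, ¬ G.Adj u v → A u v = 0)
    (hpos : ∀ u v, G.Adj u v → 0 < A u v)
    (hsymm : A.IsSymm)
    (m : ℕ) (hmeq : m = G.edgeSet.ncard) (hm : 0 < m)
    (Vtr : Finset (Fin n)) (hVtr : Vtr.Nonempty)
    (lam : ℝ) (hlam : 0 < lam)
    (μmax : ℝ)
    (hmax_mem : ∃ x : Fin n → ℝ, x ≠ 0 ∧ (Bmat Vtr lam m A).mulVec x = μmax • x)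
    (hmax_ge : ∀ (μ : ℝ) (x : Fin n → ℝ), x ≠ 0 →
      (Bmat Vtr lam m A).mulVec x = μ • x → μ ≤ μmax)
    (hμmax_pos : 0 < μmax)
    (Yobs : Fin n → ℝ) (i j u : Fin n) (r : ℕ) :
    HasDerivAt
      (fun θ : ℝ => Tvec Vtr lam m (pert A i j θ) μmax Yobs r u)
      (-(lam / (m * μmax)) * ∑ h ∈ Finset.range r,
        (((1 - μmax⁻¹ • Bmat Vtr lam m A) ^ (r - 1 - h)) u i * Tvec Vtr lam m A μmax Yobs h i
          + ((1 - μmax⁻¹ • Bmat Vtr lam m A) ^ (r - 1 - h)) u j * Tvec Vtr lam m A μmax Yobs h j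
          - ((1 - μmax⁻¹ • Bmat Vtr lam m A) ^ (r - 1 - h)) u j * Tvec Vtr lam m A μmax Yobs h i
          - ((1 - μmax⁻¹ • Bmat Vtr lam m A) ^ (r - 1 - h)) u i * Tvec Vtr lam m A μmax Yobs h j))
      (A i j) := by
  set M := 1 - μmax⁻¹ • Bmat Vtr lam m A with hM
  set d : Fin n → ℝ := Pi.single i 1 - Pi.single j 1 with hd
  set v := μmax⁻¹ • (Stin Vtr).mulVec Yobs with hv
  set C := (-(lam / (m * μmax))) • Matrix.vecMulVec d d with hC
  have hT : ∀ h, Tvec Vtr lam m A μmax Yobs h = (M ^ h).mulVec v := fun h => rfl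
  have hpath : ∀ θ, 1 - μmax⁻¹ • Bmat Vtr lam m (pert A i j θ) = M + (θ - A i j) • C := by
    intro θ
    have hc : lam / (m * μmax) = μmax⁻¹ * (lam / m) := by
      rw [mul_comm (m : ℝ), div_mul_eq_div_div, div_right_comm, div_eq_inv_mul]
    rw [hM, hC, Bmat, Bmat, lapMat_pert A hsymm, hc]
    ext s t
    simp only [Matrix.sub_apply, Matrix.add_apply, Matrix.smul_apply, smul_eq_mul]
    ring
  have hfun : (fun θ : ℝ => Tvec Vtr lam m (pert A i j θ) μmax Yobs r u) =
      fun θ : ℝ => ((M + (θ - A i j) • C) ^ r).mulVec v u := by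
    funext θ
    rw [Tvec, hpath]
  rw [hfun]
  refine (hasDerivAt_pow_mulVec M C v (A i j) r u).congr_deriv ?_
  rw [Finset.mul_sum]
  refine Finset.sum_congr rfl fun h _ => ?_
  rw [hT]
  generalize (M ^ h).mulVec v = w
  generalize M ^ (r - 1 - h) = N
  have h1 : C.mulVec w = (-(lam / (m * μmax)) * (w i - w j)) • d := by
    rw [hC, Matrix.smul_mulVec, Matrix.vecMulVec_mulVec]
    ext s
    simp [hd, sub_dotProduct]
    ring
  rw [h1, Matrix.mulVec_smul, hd, Matrix.mulVec_sub]
  simp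
  ring
end

section
/- There exists a universal constant C > 0 with the following property. Assume G is connected, let Y_obs ∈ ℝ^n, y_∞ = ‖Y_obs‖_∞, let V_out ⊆ {1,…,n} be nonempty with diagonal 0/1 selection matrix S_out, let μ_min ≤ μ_max be the smallest and largest eigenvalues of B(A), μ = μ_min/μ_max, Y(A) = B(A)^{-1} S̃_in Y_obs, and define the outer objective F_out(A) = ‖S_out (Y(A) − Y_obs)‖². Let i, j be nodes with dist_G(i,v) ≥ k and dist_G(j,v) ≥ k for all v ∈ V_out, and dist_G(i,w) ≥ q and dist_G(j,w) ≥ q for all w ∈ V_tr. Then the derivative of F_out along the symmetric perturbation of the entry pair (A_{ij}, A_{ji}) satisfies |∂F_out/∂A_{ij}| ≤ C λ ((√|V_out| + μ_min √|V_tr| |V_out|) / (μ_min³ |V_tr| m)) y_∞² (1 − μ)^{q+k}. -/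
/-!
Write `b = S̃_in Y_obs`, `y = B⁻¹ b`, `r = S_out (y - Y_obs)` and `g = B⁻¹ r`. The perturbation of
the entry pair `(i, j)` is a rank-one update of `B` along `eᵢ - eⱼ`, so Sherman–Morrison gives
`∂F_out = -2 (λ / m) (y i - y j) (g i - g j)` (`hasDerivAt_objective`).

Both factors decay exponentially (`decay`). If `B y = b` and `N = 1 - B / μmax`, then
`y = N y + b / μmax`; since `N` moves supports by at most one hop (`pow_mulVec_eq_zero`), iterating
gives `y u = (N ^ q y) u` at every node `u` at distance at least `q` from the support of `b`, and
`N` contracts Euclidean norms by `1 - μmin / μmax` (`spectral_compare`). It remains to insert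
`‖y‖ ≤ ‖b‖ / μmin ≤ y_∞ / (μmin √|V_tr|)` and
`‖g‖ ≤ ‖r‖ / μmin ≤ (y_∞ / (μmin √|V_tr|) + √|V_out| y_∞) / μmin`; the constant is `C = 8`.
-/

/-! STATEMENT 17: there is a universal constant `C > 0` such that the hypergradient of
`F_out (A) = ‖S_out (Y(A) - Y_obs)‖²` along the symmetric perturbation of an edge whose
endpoints are at least `k` hops from `V_out` and `q` hops from `V_tr` is bounded by
`C λ ((√|V_out| + μmin √|V_tr| |V_out|) / (μmin³ |V_tr| m)) y_∞² (1 - μ)^(q+k)`. -/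

open scoped BigOperators Matrix

/-! ### Spectral estimates -/

/-- The Euclidean norm of a plain vector `Fin n → ℝ` (whose own norm is the sup norm). -/
noncomputable def euclNorm {n : ℕ} (x : Fin n → ℝ) : ℝ := ‖WithLp.toLp 2 x‖

lemma euclNorm_nonneg {n : ℕ} (x : Fin n → ℝ) : 0 ≤ euclNorm x := norm_nonneg _

lemma euclNorm_sq {n : ℕ} (x : Fin n → ℝ) : euclNorm x ^ 2 = ∑ a, x a ^ 2 := by
  simp [euclNorm, EuclideanSpace.real_norm_sq_eq]

lemma abs_le_euclNorm {n : ℕ} (x : Fin n → ℝ) (a : Fin n) : |x a| ≤ euclNorm x := by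
  apply abs_le_of_sq_le_sq _ (euclNorm_nonneg x)
  rw [euclNorm_sq]
  exact Finset.single_le_sum (f := fun a => x a ^ 2) (fun _ _ => sq_nonneg _) (Finset.mem_univ a)

lemma euclNorm_sub_le {n : ℕ} (x y : Fin n → ℝ) :
    euclNorm (x - y) ≤ euclNorm x + euclNorm y := by
  simpa [euclNorm] using norm_sub_le (WithLp.toLp 2 x) (WithLp.toLp 2 y)

/-- A vector vanishing off `V` has Euclidean norm at most `√|V|` times a bound on its entries. -/
lemma euclNorm_le_of_supp {n : ℕ} (V : Finset (Fin n)) (x : Fin n → ℝ) (M : ℝ) (hM : 0 ≤ M)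
    (hx : ∀ a ∈ V, |x a| ≤ M) (h0 : ∀ a, a ∉ V → x a = 0) :
    euclNorm x ≤ Real.sqrt V.card * M := by
  apply abs_le_of_sq_le_sq' _ (by positivity) |>.2
  rw [euclNorm_sq, mul_pow, Real.sq_sqrt (by positivity)]
  rw [← Finset.sum_subset (Finset.subset_univ V) (fun a _ ha => by simp [h0 a ha])]
  calc ∑ a ∈ V, x a ^ 2 ≤ ∑ a ∈ V, M ^ 2 :=
        Finset.sum_le_sum fun a ha => sq_le_sq' (abs_le.mp (hx a ha)).1 (abs_le.mp (hx a ha)).2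
    _ = _ := by simp

lemma dotProduct_mulVec_symm {n : ℕ} {B : Matrix (Fin n) (Fin n) ℝ} (hB : B.IsSymm)
    (x y : Fin n → ℝ) : x ⬝ᵥ B *ᵥ y = B *ᵥ x ⬝ᵥ y := by
  rw [Matrix.dotProduct_mulVec, ← Matrix.mulVec_transpose, hB.eq]

/-- Comparison of two affine functions of a symmetric matrix `B`: if
`|α + β t| ≤ K |α' + β' t|` at every eigenvalue `t`, the same inequality holds for the Euclidean
norms of `(α + β B) x` and `(α' + β' B) x`. -/
lemma spectral_compare {n : ℕ} {B : Matrix (Fin n) (Fin n) ℝ} (hB : B.IsSymm)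
    (α β α' β' K : ℝ) (hK : 0 ≤ K)
    (h : ∀ (t : ℝ) (x : Fin n → ℝ), x ≠ 0 → B *ᵥ x = t • x →
      |α + β * t| ≤ K * |α' + β' * t|) (x : Fin n → ℝ) :
    euclNorm (α • x + β • B *ᵥ x) ≤ K * euclNorm (α' • x + β' • B *ᵥ x) := by
  have hH : B.IsHermitian := by rwa [Matrix.IsHermitian, Matrix.conjTranspose_eq_transpose_of_trivial]
  set e := hH.eigenvectorBasis with he
  -- The `a`-th coefficient in the eigenbasis is multiplied by `α + β t_a`.
  have key : ∀ (α β : ℝ) a, inner ℝ (e a) (WithLp.toLp 2 (α • x + β • B *ᵥ x)) =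
      (α + β * hH.eigenvalues a) * inner ℝ (e a) (WithLp.toLp 2 x) := by
    intro α β a
    have h1 : inner ℝ (e a) (WithLp.toLp 2 (B *ᵥ x)) =
        hH.eigenvalues a * inner ℝ (e a) (WithLp.toLp 2 x) := by
      have h2 := hH.mulVec_eigenvectorBasis a
      rw [EuclideanSpace.inner_eq_star_dotProduct, EuclideanSpace.inner_eq_star_dotProduct]
      simp only [star_trivial]
      rw [dotProduct_comm, dotProduct_mulVec_symm hB, h2, smul_dotProduct, dotProduct_comm,
        smul_eq_mul]
    rw [WithLp.toLp_add, WithLp.toLp_smul, WithLp.toLp_smul, inner_add_right,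
      real_inner_smul_right, real_inner_smul_right, h1]
    ring
  apply abs_le_of_sq_le_sq' _ (mul_nonneg hK (euclNorm_nonneg _)) |>.2
  rw [mul_pow, euclNorm, euclNorm, ← e.sum_sq_norm_inner_right, ← e.sum_sq_norm_inner_right,
    Finset.mul_sum]
  refine Finset.sum_le_sum fun a _ => ?_
  rw [key, key, ← mul_pow]
  refine pow_le_pow_left₀ (norm_nonneg _) ?_ 2
  rw [norm_mul, norm_mul, ← mul_assoc]
  refine mul_le_mul_of_nonneg_right ?_ (norm_nonneg _)
  refine h _ (e a) ?_ (hH.mulVec_eigenvectorBasis a)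
  intro h0
  have h1 := e.orthonormal.1 a
  rw [show e a = 0 from by ext b; exact congrFun h0 b] at h1
  simp at h1

/-! ### Finite propagation and decay -/

/-- Each application of a matrix supported on the edges and the diagonal spreads the support by
at most one hop, so `N ^ l b` vanishes at nodes more than `l` hops away from the support of `b`. -/
lemma pow_mulVec_eq_zero {n : ℕ} (G : SimpleGraph (Fin n)) (N : Matrix (Fin n) (Fin n) ℝ)
    (hN : ∀ u v, u ≠ v → ¬ G.Adj u v → N u v = 0) (V : Finset (Fin n)) (b : Fin n → ℝ)
    (hb : ∀ a, a ∉ V → b a = 0) (l : ℕ) :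
    ∀ u, (∀ w ∈ V, ((l + 1 : ℕ) : ℕ∞) ≤ G.edist u w) → ((N ^ l) *ᵥ b) u = 0 := by
  induction l with
  | zero =>
    intro u hu
    simp only [pow_zero, Matrix.one_mulVec]
    apply hb
    intro hV
    have := hu u hV
    simp at this
  | succ l ih =>
    intro u hu
    rw [pow_succ', ← Matrix.mulVec_mulVec]
    rw [Matrix.mulVec, dotProduct]
    refine Finset.sum_eq_zero fun v _ => ?_
    by_cases huv : G.edist u v ≤ 1
    · rw [ih v, mul_zero]
      intro w hw
      have h1 := (hu w hw).trans (SimpleGraph.edist_triangle (v := v))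
      have h2 := h1.trans (add_le_add_left huv _)
      rw [Nat.cast_succ, add_comm] at h2
      exact (ENat.add_le_add_iff_left ENat.one_ne_top).mp h2
    · rw [SimpleGraph.edist_le_one_iff_adj_or_eq, not_or] at huv
      rw [hN u v huv.2 huv.1, zero_mul]

/-- Exponential decay of the solution of `B y = b` away from the support `V` of `b`: with
`N = 1 - B / μmax` one has `y = N y + b / μmax`, hence `y u = (N ^ q y) u` for `u` at distance
at least `q` from `V`, and `N` contracts by `1 - μmin / μmax`. -/
lemma decay {n : ℕ} (G : SimpleGraph (Fin n)) (B : Matrix (Fin n) (Fin n) ℝ) (hB : B.IsSymm)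
    (hsupp : ∀ u v, u ≠ v → ¬ G.Adj u v → B u v = 0) (μmin μmax : ℝ) (hpos : 0 < μmin)
    (hle : μmin ≤ μmax)
    (hmin : ∀ (μ : ℝ) (x : Fin n → ℝ), x ≠ 0 → B *ᵥ x = μ • x → μmin ≤ μ)
    (hmax : ∀ (μ : ℝ) (x : Fin n → ℝ), x ≠ 0 → B *ᵥ x = μ • x → μ ≤ μmax)
    (V : Finset (Fin n)) (y b : Fin n → ℝ) (hy : B *ᵥ y = b) (hb : ∀ a, a ∉ V → b a = 0)
    (u : Fin n) (q : ℕ) (hu : ∀ w ∈ V, (q : ℕ∞) ≤ G.edist u w) :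
    |y u| ≤ (1 - μmin / μmax) ^ q * euclNorm y := by
  have hmaxpos : 0 < μmax := hpos.trans_le hle
  have hρ : 0 ≤ 1 - μmin / μmax := by
    rw [sub_nonneg, div_le_one hmaxpos]; exact hle
  set N : Matrix (Fin n) (Fin n) ℝ := 1 - μmax⁻¹ • B with hNdef
  have hNx : ∀ x, N *ᵥ x = (1 : ℝ) • x + (-μmax⁻¹) • B *ᵥ x := by
    intro x
    rw [hNdef, Matrix.sub_mulVec, Matrix.one_mulVec, Matrix.smul_mulVec, one_smul, neg_smul,
      sub_eq_add_neg]
  have hNsupp : ∀ u v, u ≠ v → ¬ G.Adj u v → N u v = 0 := by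
    intro u v h1 h2
    simp [hNdef, Matrix.one_apply_ne h1, hsupp u v h1 h2]
  have hcontr : ∀ x, euclNorm (N *ᵥ x) ≤ (1 - μmin / μmax) * euclNorm x := by
    intro x
    have := spectral_compare hB 1 (-μmax⁻¹) 1 0 (1 - μmin / μmax) hρ (fun t x hx ht => by
      have h1 := hmin t x hx ht
      have h2 := hmax t x hx ht
      have h3 : t / μmax ≤ 1 := (div_le_one hmaxpos).mpr h2
      have h4 : μmin / μmax ≤ t / μmax := by gcongr
      rw [show 1 + -μmax⁻¹ * t = 1 - t / μmax by ring, abs_of_nonneg (by linarith)]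
      simp
      linarith) x
    rw [hNx]
    simpa using this
  have hpow : ∀ l, euclNorm ((N ^ l) *ᵥ y) ≤ (1 - μmin / μmax) ^ l * euclNorm y := by
    intro l
    induction l with
    | zero => simp
    | succ l ih =>
      rw [pow_succ', ← Matrix.mulVec_mulVec, pow_succ', mul_assoc]
      exact (hcontr _).trans (mul_le_mul_of_nonneg_left ih hρ)
  have hyN : y = N *ᵥ y + μmax⁻¹ • b := by
    rw [hNx, hy]; simp
  have hstep : ∀ l ≤ q, y u = ((N ^ l) *ᵥ y) u := by
    intro l
    induction l with
    | zero => simp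
    | succ l ih =>
      intro hl
      rw [ih (by omega)]
      conv_lhs => rw [hyN]
      rw [Matrix.mulVec_add, Matrix.mulVec_smul, Matrix.mulVec_mulVec, ← pow_succ, Pi.add_apply,
        Pi.smul_apply, pow_mulVec_eq_zero G N hNsupp V b hb l u
          (fun w hw => le_trans (by exact_mod_cast hl) (hu w hw))]
      simp
  rw [hstep q le_rfl]
  exact (abs_le_euclNorm _ u).trans (hpow q)

/-! ### The matrix `B` -/

lemma selMat_mulVec {n : ℕ} (V : Finset (Fin n)) (x : Fin n → ℝ) (a : Fin n) :
    ((selMat V) *ᵥ x) a = if a ∈ V then x a else 0 := by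
  simp [selMat, Matrix.mulVec_diagonal]

lemma lapMat_symm {n : ℕ} {A : Matrix (Fin n) (Fin n) ℝ} (hA : A.IsSymm) :
    (lapMat A).IsSymm := by
  rw [Matrix.IsSymm, lapMat, Matrix.transpose_sub, Matrix.diagonal_transpose, hA.eq]

lemma Bmat_symm {n : ℕ} (V : Finset (Fin n)) (lam : ℝ) (m : ℕ) {A : Matrix (Fin n) (Fin n) ℝ}
    (hA : A.IsSymm) : (Bmat V lam m A).IsSymm := by
  rw [Matrix.IsSymm, Bmat, Stin, selMat, Matrix.transpose_add, Matrix.transpose_smul,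
    Matrix.transpose_smul, Matrix.diagonal_transpose, (lapMat_symm hA).eq]

/-- The Dirichlet form of the weighted Laplacian. -/
lemma lapMat_quadForm {n : ℕ} {A : Matrix (Fin n) (Fin n) ℝ} (hA : A.IsSymm) (x : Fin n → ℝ) :
    x ⬝ᵥ (lapMat A) *ᵥ x = 2⁻¹ * ∑ u, ∑ v, A u v * (x u - x v) ^ 2 := by
  have h1 : x ⬝ᵥ (lapMat A) *ᵥ x = ∑ u, ∑ v, (A u v * x u ^ 2 - A u v * x u * x v) := by
    rw [lapMat, Matrix.sub_mulVec, dotProduct_sub]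
    simp only [dotProduct, Matrix.mulVec_diagonal]
    simp only [dotProduct, Matrix.mulVec, Finset.sum_sub_distrib, Finset.mul_sum, Finset.sum_mul]
    congr 1 <;> exact Finset.sum_congr rfl fun u _ => Finset.sum_congr rfl fun v _ => by ring
  have h2 : ∑ u, ∑ v, (A u v * x u ^ 2 - A u v * x u * x v) =
      ∑ u, ∑ v, (A u v * x v ^ 2 - A u v * x u * x v) := by
    rw [Finset.sum_comm]
    exact Finset.sum_congr rfl fun u _ => Finset.sum_congr rfl fun v _ => by
      rw [hA.apply]; ring
  have h3 : ∑ u, ∑ v, A u v * (x u - x v) ^ 2 =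
      ∑ u, ∑ v, (A u v * x u ^ 2 - A u v * x u * x v) +
      ∑ u, ∑ v, (A u v * x v ^ 2 - A u v * x u * x v) := by
    simp only [← Finset.sum_add_distrib]
    exact Finset.sum_congr rfl fun u _ => Finset.sum_congr rfl fun v _ => by ring
  rw [h3, ← h2, h1]; ring

/-- Every eigenvalue of `B` is positive: for an eigenvalue `≤ 0` the Dirichlet form of the
eigenvector would vanish, so by connectedness it would be constant, and it vanishes on `V`. -/
lemma Bmat_eigenvalue_pos {n : ℕ} (G : SimpleGraph (Fin n)) {A : Matrix (Fin n) (Fin n) ℝ}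
    (hG : G.Connected) (h0 : ∀ u v, ¬ G.Adj u v → A u v = 0) (h1 : ∀ u v, G.Adj u v → 0 < A u v)
    (hA : A.IsSymm) (m : ℕ) (hm : 0 < m) (V : Finset (Fin n)) (hV : V.Nonempty) (lam : ℝ)
    (hlam : 0 < lam) (μ : ℝ) (x : Fin n → ℝ) (hx : x ≠ 0)
    (hμ : (Bmat V lam m A) *ᵥ x = μ • x) : 0 < μ := by
  by_contra! hneg
  have hcard : (0 : ℝ) < V.card := by exact_mod_cast hV.card_pos
  have hm' : (0 : ℝ) < m := by exact_mod_cast hm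
  have hAnn : ∀ u v, 0 ≤ A u v := fun u v => by
    by_cases h : G.Adj u v
    · exact (h1 u v h).le
    · exact (h0 u v h).ge
  have hq : x ⬝ᵥ (Bmat V lam m A) *ᵥ x = (V.card : ℝ)⁻¹ * ∑ a, (if a ∈ V then x a ^ 2 else 0) +
      lam / m * (2⁻¹ * ∑ u, ∑ v, A u v * (x u - x v) ^ 2) := by
    rw [Bmat, Stin, Matrix.add_mulVec, Matrix.smul_mulVec, Matrix.smul_mulVec, dotProduct_add,
      dotProduct_smul, dotProduct_smul, lapMat_quadForm hA, smul_eq_mul, smul_eq_mul]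
    congr 2
    refine Finset.sum_congr rfl fun a _ => ?_
    rw [selMat_mulVec]; split_ifs <;> ring
  have hq' : x ⬝ᵥ (Bmat V lam m A) *ᵥ x ≤ 0 := by
    rw [hμ, dotProduct_smul, smul_eq_mul]
    exact mul_nonpos_of_nonpos_of_nonneg hneg
      (Finset.sum_nonneg fun a _ => mul_self_nonneg _)
  have hs1 : 0 ≤ ∑ a, (if a ∈ V then x a ^ 2 else 0) :=
    Finset.sum_nonneg fun a _ => by split_ifs <;> positivity
  have hs2 : 0 ≤ ∑ u, ∑ v, A u v * (x u - x v) ^ 2 :=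
    Finset.sum_nonneg fun u _ => Finset.sum_nonneg fun v _ => mul_nonneg (hAnn u v) (sq_nonneg _)
  rw [hq] at hq'
  have hp1 := mul_nonneg (inv_pos.mpr hcard).le hs1
  have hp2 : 0 ≤ lam / m * (2⁻¹ * ∑ u, ∑ v, A u v * (x u - x v) ^ 2) := by positivity
  have e1 : ∑ a, (if a ∈ V then x a ^ 2 else 0) = 0 := by
    have : (V.card : ℝ)⁻¹ * ∑ a, (if a ∈ V then x a ^ 2 else 0) = 0 := by linarith
    exact (mul_eq_zero.mp this).resolve_left (inv_pos.mpr hcard).ne'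
  have e2 : ∑ u, ∑ v, A u v * (x u - x v) ^ 2 = 0 := by
    have : lam / m * (2⁻¹ * ∑ u, ∑ v, A u v * (x u - x v) ^ 2) = 0 := by linarith
    have h2 := (mul_eq_zero.mp this).resolve_left (by positivity)
    exact (mul_eq_zero.mp h2).resolve_left (by norm_num)
  have hV0 : ∀ a ∈ V, x a = 0 := by
    intro a ha
    have := (Finset.sum_eq_zero_iff_of_nonneg
      (fun a _ => by split_ifs <;> positivity)).mp e1 a (Finset.mem_univ a)
    simpa [ha] using this
  have hadj : ∀ u v, G.Adj u v → x u = x v := by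
    intro u v huv
    have h2 := (Finset.sum_eq_zero_iff_of_nonneg (fun u _ => Finset.sum_nonneg fun v _ =>
      mul_nonneg (hAnn u v) (sq_nonneg _))).mp e2 u (Finset.mem_univ u)
    have h3 := (Finset.sum_eq_zero_iff_of_nonneg (fun v _ =>
      mul_nonneg (hAnn u v) (sq_nonneg _))).mp h2 v (Finset.mem_univ v)
    have h4 := (mul_eq_zero.mp h3).resolve_left (h1 u v huv).ne'
    exact sub_eq_zero.mp (pow_eq_zero_iff (two_ne_zero) |>.mp h4)
  have hconst : ∀ u v, x u = x v := by
    intro u v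
    obtain ⟨p⟩ := hG.preconnected u v
    induction p with
    | nil => rfl
    | cons h _ ih => exact (hadj _ _ h).trans ih
  obtain ⟨a, ha⟩ := hV
  exact hx (funext fun u => (hconst u a).trans (hV0 a ha))

lemma Bmat_supp {n : ℕ} (G : SimpleGraph (Fin n)) {A : Matrix (Fin n) (Fin n) ℝ}
    (h0 : ∀ u v, ¬ G.Adj u v → A u v = 0) (V : Finset (Fin n)) (lam : ℝ) (m : ℕ) :
    ∀ u v, u ≠ v → ¬ G.Adj u v → Bmat V lam m A u v = 0 := by
  intro u v huv hadj
  simp [Bmat, Stin, selMat, lapMat, Matrix.diagonal_apply_ne _ huv, h0 u v hadj]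

/-! ### The derivative -/

/-- Changing the entry pair `(i, j)` is a rank-one update of `B` along `eᵢ - eⱼ`. For `i = j`
both sides reduce to `B x`. -/
lemma Bmat_pert_mulVec {n : ℕ} {A : Matrix (Fin n) (Fin n) ℝ} (hA : A.IsSymm)
    (V : Finset (Fin n)) (lam : ℝ) (m : ℕ) (i j : Fin n) (θ : ℝ) (x : Fin n → ℝ) :
    (Bmat V lam m (pert A i j θ)) *ᵥ x = (Bmat V lam m A) *ᵥ x +
      ((θ - A i j) * (lam / m) * (x i - x j)) •
        (Pi.single i (1 : ℝ) - Pi.single j (1 : ℝ) : Fin n → ℝ) := by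
  have hlap : ∀ (A : Matrix (Fin n) (Fin n) ℝ) u,
      ((lapMat A) *ᵥ x) u = ∑ v, A u v * (x u - x v) := by
    intro A u
    rw [lapMat, Matrix.sub_mulVec, Pi.sub_apply, Matrix.mulVec_diagonal, Finset.sum_mul]
    simp [Matrix.mulVec, dotProduct, mul_sub]
  ext u
  have hp : ∀ v, pert A i j θ u v * (x u - x v) = A u v * (x u - x v) +
      (θ - A i j) * (x i - x j) * ((if v = j then (if u = i then 1 else 0) else 0) -
        (if v = i then (if u = j then 1 else 0) else 0)) := by
    intro v
    have hs := hA.apply i j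
    simp only [pert, Matrix.of_apply]
    by_cases h1 : u = i <;> by_cases h2 : v = j <;> by_cases h3 : u = j <;> by_cases h4 : v = i <;>
      simp_all <;> ring
  have hsum : ((lapMat (pert A i j θ)) *ᵥ x) u = ((lapMat A) *ᵥ x) u +
      (θ - A i j) * (x i - x j) * ((if u = i then 1 else 0) - (if u = j then 1 else 0)) := by
    rw [hlap, hlap, Finset.sum_congr rfl fun v _ => hp v, Finset.sum_add_distrib, ← Finset.mul_sum,
      Finset.sum_sub_distrib]
    simp
  simp only [Bmat, Matrix.add_mulVec, Matrix.smul_mulVec, Pi.add_apply, Pi.smul_apply, hsum,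
    smul_eq_mul, Pi.sub_apply, Pi.single_apply]
  ring

/-- The hypergradient through the solution `z` of `B z = eᵢ - eⱼ`. The Sherman–Morrison formula
gives `B(θ)⁻¹ b = y - s(θ) z` near `θ = A i j`, with `s` vanishing there. -/
lemma hasDerivAt_objective {n : ℕ} {A : Matrix (Fin n) (Fin n) ℝ} (hA : A.IsSymm)
    (V W : Finset (Fin n)) (lam : ℝ) (m : ℕ) (hdet : (Bmat V lam m A).det ≠ 0) (i j : Fin n)
    (b Y y z : Fin n → ℝ) (hy : (Bmat V lam m A) *ᵥ y = b)
    (hz : (Bmat V lam m A) *ᵥ z = Pi.single i (1 : ℝ) - Pi.single j (1 : ℝ)) :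
    HasDerivAt (fun θ : ℝ => ∑ a, (((selMat W).mulVec
        ((Bmat V lam m (pert A i j θ))⁻¹.mulVec b - Y)) a) ^ 2)
      (-(2 * (lam / m) * (y i - y j) * ((selMat W) *ᵥ (y - Y) ⬝ᵥ z))) (A i j) := by
  set c : ℝ := lam / m with hc
  let den : ℝ → ℝ := fun θ => 1 + (θ - A i j) * c * (z i - z j)
  let s : ℝ → ℝ := fun θ => (θ - A i j) * c * (y i - y j) / den θ
  have hden0 : den (A i j) = 1 := by simp [den]
  have hpert0 : pert A i j (A i j) = A := by
    ext u v
    simp only [pert, Matrix.of_apply]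
    split_ifs with h
    · rcases h with ⟨rfl, rfl⟩ | ⟨rfl, rfl⟩
      · rfl
      · exact hA.apply _ _
    · rfl
  have hdenc : ∀ᶠ θ in nhds (A i j), den θ ≠ 0 := by
    have : ContinuousAt den (A i j) := by fun_prop
    exact this.eventually_ne (by rw [hden0]; exact one_ne_zero)
  have hdetc : ∀ᶠ θ in nhds (A i j), (Bmat V lam m (pert A i j θ)).det ≠ 0 := by
    have hpc : Continuous fun θ => pert A i j θ := by
      refine continuous_matrix fun u v => ?_
      simp only [pert, Matrix.of_apply]
      split_ifs <;> fun_prop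
    have : Continuous fun θ => (Bmat V lam m (pert A i j θ)).det := by
      refine Continuous.matrix_det ?_
      unfold Bmat lapMat
      refine continuous_const.add (Continuous.fun_const_smul (Continuous.sub ?_ hpc) _)
      refine Continuous.matrix_diagonal (continuous_pi fun u => ?_)
      exact continuous_finsetSum _ fun v _ => hpc.matrix_elem u v
    exact this.continuousAt.eventually_ne (by rwa [hpert0])
  have heq : ∀ᶠ θ in nhds (A i j), (Bmat V lam m (pert A i j θ))⁻¹ *ᵥ b = y - s θ • z := by
    filter_upwards [hdenc, hdetc] with θ h1 h2
    have hb : (Bmat V lam m (pert A i j θ)) *ᵥ (y - s θ • z) = b := by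
      rw [Bmat_pert_mulVec hA, Matrix.mulVec_sub, Matrix.mulVec_smul, hy, hz]
      have hs : (θ - A i j) * c * ((y - s θ • z) i - (y - s θ • z) j) = s θ := by
        have : s θ * den θ = (θ - A i j) * c * (y i - y j) := div_mul_cancel₀ _ h1
        simp only [den] at this
        simp only [Pi.sub_apply, Pi.smul_apply, smul_eq_mul]
        linear_combination -this
      rw [← hc, hs]
      abel
    rw [← hb, Matrix.mulVec_mulVec, Matrix.nonsing_inv_mul _ (isUnit_iff_ne_zero.mpr h2),
      Matrix.one_mulVec]
  have hsd : HasDerivAt s (c * (y i - y j)) (A i j) := by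
    have hn : HasDerivAt (fun θ : ℝ => (θ - A i j) * c * (y i - y j)) (c * (y i - y j)) (A i j) := by
      simpa using (((hasDerivAt_id (A i j)).sub_const (A i j)).mul_const c).mul_const (y i - y j)
    have hd : HasDerivAt den (c * (z i - z j)) (A i j) := by
      have h1 := ((((hasDerivAt_id (A i j)).sub_const (A i j)).mul_const c).mul_const
        (z i - z j)).const_add 1
      rw [one_mul] at h1
      exact h1
    have := hn.div hd (by rw [hden0]; exact one_ne_zero)
    rw [hden0] at this
    exact this.congr_deriv (by simp)
  have hs0 : s (A i j) = 0 := by simp [s]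
  have hmain : HasDerivAt (fun θ : ℝ => ∑ a, (if a ∈ W then y a - s θ * z a - Y a else 0) ^ 2)
      (∑ a, (if a ∈ W then 2 * (y a - Y a) * (-(c * (y i - y j) * z a)) else 0)) (A i j) := by
    refine HasDerivAt.fun_sum fun a _ => ?_
    split_ifs with ha
    · have := (((hsd.mul_const (z a)).const_sub (y a)).sub_const (Y a)).pow 2
      exact this.congr_deriv (by simp [hs0])
    · simpa using hasDerivAt_const (A i j) (0 : ℝ)
  refine (hmain.congr_of_eventuallyEq ?_).congr_deriv ?_
  · filter_upwards [heq] with θ h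
    rw [h]
    refine Finset.sum_congr rfl fun a _ => ?_
    rw [selMat_mulVec]
    simp
  · rw [dotProduct, Finset.mul_sum, ← Finset.sum_neg_distrib]
    refine Finset.sum_congr rfl fun a _ => ?_
    rw [selMat_mulVec]
    split_ifs
    · simp only [Pi.sub_apply]; ring
    · ring

theorem hypergradient_exponential_damping :
    ∃ C : ℝ, 0 < C ∧
      ∀ (n : ℕ) (G : SimpleGraph (Fin n)) (A : Matrix (Fin n) (Fin n) ℝ),
        G.Connected →
        (∀ u v, ¬ G.Adj u v → A u v = 0) →
        (∀ u v, G.Adj u v → 0 < A u v) →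
        A.IsSymm →
        ∀ m : ℕ, m = G.edgeSet.ncard → 0 < m →
        ∀ Vtr Vout : Finset (Fin n), Vtr.Nonempty → Vout.Nonempty →
        ∀ lam : ℝ, 0 < lam →
        ∀ (Yobs : Fin n → ℝ) (μmin μmax : ℝ),
        (∃ x : Fin n → ℝ, x ≠ 0 ∧ (Bmat Vtr lam m A).mulVec x = μmin • x) →
        (∀ (μ : ℝ) (x : Fin n → ℝ), x ≠ 0 →
          (Bmat Vtr lam m A).mulVec x = μ • x → μmin ≤ μ) →
        (∃ x : Fin n → ℝ, x ≠ 0 ∧ (Bmat Vtr lam m A).mulVec x = μmax • x) →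
        (∀ (μ : ℝ) (x : Fin n → ℝ), x ≠ 0 →
          (Bmat Vtr lam m A).mulVec x = μ • x → μ ≤ μmax) →
        ∀ (i j : Fin n) (k q : ℕ),
        (∀ v ∈ Vout, (k : ℕ∞) ≤ G.edist i v) →
        (∀ v ∈ Vout, (k : ℕ∞) ≤ G.edist j v) →
        (∀ w ∈ Vtr, (q : ℕ∞) ≤ G.edist i w) →
        (∀ w ∈ Vtr, (q : ℕ∞) ≤ G.edist j w) →
        |deriv (fun θ : ℝ => ∑ a, (((selMat Vout).mulVec
            ((Bmat Vtr lam m (pert A i j θ))⁻¹.mulVec ((Stin Vtr).mulVec Yobs) - Yobs)) a) ^ 2)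
          (A i j)| ≤
          C * lam * ((Real.sqrt (Vout.card : ℝ) +
              μmin * Real.sqrt (Vtr.card : ℝ) * (Vout.card : ℝ)) /
            (μmin ^ 3 * (Vtr.card : ℝ) * (m : ℝ))) * ‖Yobs‖ ^ 2 *
            (1 - μmin / μmax) ^ (q + k) := by
  refine ⟨8, by norm_num, ?_⟩
  intro n G A hG h0 h1 hA m _ hm Vtr Vout hVtr hVout lam hlam Y μmin μmax ⟨xm, hxm, hxme⟩ hmin
    ⟨xM, hxM, hxMe⟩ hmax i j k q hki hkj hqi hqj
  have hsymm := Bmat_symm Vtr lam m hA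
  have hsupp := Bmat_supp G h0 Vtr lam m
  have hev := Bmat_eigenvalue_pos G hG h0 h1 hA m hm Vtr hVtr lam hlam
  have hpos : 0 < μmin := hev μmin xm hxm hxme
  have hle : μmin ≤ μmax := hmax μmin xm hxm hxme
  have hm' : (0 : ℝ) < m := by exact_mod_cast hm
  have hρ : 0 ≤ 1 - μmin / μmax := by
    rw [sub_nonneg, div_le_one (hpos.trans_le hle)]; exact hle
  set B := Bmat Vtr lam m A with hB
  have hdet : B.det ≠ 0 := by
    intro hd
    obtain ⟨v, hv, hv0⟩ := Matrix.exists_mulVec_eq_zero_iff.mpr hd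
    exact (hev 0 v hv (by rw [hv0, zero_smul])).false
  have hsolve : ∀ x, B *ᵥ (B⁻¹ *ᵥ x) = x := fun x => by
    rw [Matrix.mulVec_mulVec, Matrix.mul_nonsing_inv _ (isUnit_iff_ne_zero.mpr hdet),
      Matrix.one_mulVec]
  have hcoer : ∀ x, μmin * euclNorm x ≤ euclNorm (B *ᵥ x) := by
    intro x
    have h2 := spectral_compare hsymm 1 0 0 1 μmin⁻¹ (by positivity) (fun t x hx ht => by
      have h3 := hmin t x hx ht
      rw [zero_mul, add_zero, abs_one, zero_add, one_mul, abs_of_pos (hpos.trans_le h3),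
        ← div_eq_inv_mul, le_div_iff₀ hpos, one_mul]
      exact h3) x
    simp only [one_smul, zero_smul, add_zero, zero_add] at h2
    rwa [← div_eq_inv_mul, le_div_iff₀ hpos, mul_comm] at h2
  set b := (Stin Vtr) *ᵥ Y with hbdef
  set y := B⁻¹ *ᵥ b with hydef
  set r := (selMat Vout) *ᵥ (y - Y) with hrdef
  set g := B⁻¹ *ᵥ r with hgdef
  set z := B⁻¹ *ᵥ (Pi.single i (1 : ℝ) - Pi.single j (1 : ℝ) : Fin n → ℝ) with hzdef
  rw [(hasDerivAt_objective hA Vtr Vout lam m hdet i j b Y y z (hsolve _) (hsolve _)).deriv]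
  -- Symmetry of `B` turns `r ⬝ B⁻¹ (eᵢ - eⱼ)` into `g i - g j` with `B g = r`.
  have hrz : r ⬝ᵥ z = g i - g j := by
    rw [← hsolve r, ← dotProduct_mulVec_symm hsymm, hzdef, hsolve]
    simp [hgdef, dotProduct_sub]
  rw [← hrdef, hrz]
  set t := Real.sqrt (Vtr.card : ℝ) with ht
  set o := Real.sqrt (Vout.card : ℝ) with ho
  have htc : t ^ 2 = Vtr.card := Real.sq_sqrt (by positivity)
  have hoc : o ^ 2 = Vout.card := Real.sq_sqrt (by positivity)
  have ht0 : 0 < t := Real.sqrt_pos.mpr (by exact_mod_cast hVtr.card_pos)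
  have ho1 : 1 ≤ o := Real.one_le_sqrt.mpr (by exact_mod_cast hVout.card_pos)
  have hYn : 0 ≤ ‖Y‖ := norm_nonneg _
  have hb0 : ∀ a, a ∉ Vtr → b a = 0 := fun a ha => by
    simp [hbdef, Stin, Matrix.smul_mulVec, selMat_mulVec, ha]
  have hr0 : ∀ a, a ∉ Vout → r a = 0 := fun a ha => by
    simp [hrdef, selMat_mulVec, ha]
  have hbn : euclNorm b ≤ ‖Y‖ / t := by
    have h2 := euclNorm_le_of_supp Vtr b ((Vtr.card : ℝ)⁻¹ * ‖Y‖) (by positivity)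
      (fun a ha => by
        simp only [hbdef, Stin, Matrix.smul_mulVec, Pi.smul_apply, selMat_mulVec, ha, if_true,
          smul_eq_mul, abs_mul]
        rw [abs_of_nonneg (by positivity)]
        exact mul_le_mul_of_nonneg_left (norm_le_pi_norm Y a) (by positivity)) hb0
    refine h2.trans_eq ?_
    rw [← ht, ← htc]
    field_simp
  have hyn : euclNorm y ≤ ‖Y‖ / (t * μmin) := by
    have h2 := hcoer y
    rw [hsolve] at h2
    rw [← div_div, le_div_iff₀ hpos, mul_comm]
    exact h2.trans hbn
  have hrn : euclNorm r ≤ ‖Y‖ / (t * μmin) + o * ‖Y‖ := by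
    have h2 : r = (selMat Vout) *ᵥ y - (selMat Vout) *ᵥ Y := by rw [hrdef, Matrix.mulVec_sub]
    rw [h2]
    refine (euclNorm_sub_le _ _).trans (add_le_add ?_ ?_)
    · refine le_trans ?_ hyn
      apply abs_le_of_sq_le_sq' _ (euclNorm_nonneg _) |>.2
      rw [euclNorm_sq, euclNorm_sq]
      refine Finset.sum_le_sum fun a _ => ?_
      rw [selMat_mulVec]
      split_ifs
      · exact le_rfl
      · rw [zero_pow two_ne_zero]; positivity
    · refine euclNorm_le_of_supp Vout _ _ hYn (fun a ha => ?_) (fun a ha => ?_)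
      · rw [selMat_mulVec, if_pos ha]; exact norm_le_pi_norm Y a
      · rw [selMat_mulVec, if_neg ha]
  have hgn : euclNorm g ≤ (‖Y‖ / (t * μmin) + o * ‖Y‖) / μmin := by
    have h2 := hcoer g
    rw [hsolve] at h2
    rw [le_div_iff₀ hpos, mul_comm]
    exact h2.trans hrn
  have hyd := decay G B hsymm hsupp μmin μmax hpos hle hmin hmax Vtr y b (hsolve _) hb0
  have hgd := decay G B hsymm hsupp μmin μmax hpos hle hmin hmax Vout g r (hsolve _) hr0
  set ρ := 1 - μmin / μmax with hρdef
  have hyij : |y i - y j| ≤ 2 * (ρ ^ q * (‖Y‖ / (t * μmin))) := by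
    have h2 := abs_sub (y i) (y j)
    have h3 := mul_le_mul_of_nonneg_left hyn (pow_nonneg hρ q)
    linarith [hyd i q hqi, hyd j q hqj]
  have hgij : |g i - g j| ≤ 2 * (ρ ^ k * ((‖Y‖ / (t * μmin) + o * ‖Y‖) / μmin)) := by
    have h2 := abs_sub (g i) (g j)
    have h3 := mul_le_mul_of_nonneg_left hgn (pow_nonneg hρ k)
    linarith [hgd i k hki, hgd j k hkj]
  rw [abs_neg, abs_mul, abs_mul, abs_of_pos (by positivity : (0 : ℝ) < 2 * (lam / m)), ← htc, ← hoc]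
  calc 2 * (lam / m) * |y i - y j| * |g i - g j|
      ≤ 2 * (lam / m) * (2 * (ρ ^ q * (‖Y‖ / (t * μmin)))) *
        (2 * (ρ ^ k * ((‖Y‖ / (t * μmin) + o * ‖Y‖) / μmin))) := by gcongr
    _ = 8 * lam * ((1 + μmin * t * o) / (μmin ^ 3 * t ^ 2 * m)) * ‖Y‖ ^ 2 * ρ ^ (q + k) := by
        rw [pow_add]; field_simp; ring
    _ ≤ 8 * lam * ((o + μmin * t * o ^ 2) / (μmin ^ 3 * t ^ 2 * m)) * ‖Y‖ ^ 2 * ρ ^ (q + k) := by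
        have : o ≤ o ^ 2 := by nlinarith
        gcongr
end
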